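/- arXiv:1602.05738 — 2 statements merged into one kernel-verified Lean document; each statement's English description precedes it below -/
import Mathlib

section
/- Let (X, μ) be a probability space with a measure-preserving ℤ²-action, and let f ∈ L^∞(X) be an integer-valued function with Ann(f) ≠ {0}. Then there exists a finite set Δ ⊆ ℤ² ∖ {0} such that no two elements of Δ are proportional to each other and V(Ann(f)) ⊆ K(Δ). -/
open MeasureTheory

/-- The action of a Laurent polynomial `p = Σ c_g u^g ∈ ℤ[u₁^±, u₂^±]` on a function
`f : X → ℝ`, relative to a `ℤ²`-action `T` on `X` : `(p · f)(x) = Σ c_g f(g⁻¹ · x)`. -/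
noncomputable def polyAct {X : Type*} (T : ℤ × ℤ → X → X)
    (p : AddMonoidAlgebra ℤ (ℤ × ℤ)) (f : X → ℝ) : X → ℝ :=
  fun x => Finsupp.sum p.coeff fun g c => (c : ℝ) * f (T (-g) x)

/-- The 2-torus `𝕋² = {(w₁,w₂) ∈ ℂ² : |w₁| = |w₂| = 1}`. -/
def torus2 : Set (ℂ × ℂ) := {w | ‖w.1‖ = 1 ∧ ‖w.2‖ = 1}

/-- The character `χ_g(w₁,w₂) = w₁^m w₂^n` for `g = (m,n) ∈ ℤ²`. -/
noncomputable def chi (g : ℤ × ℤ) (w : ℂ × ℂ) : ℂ := w.1 ^ g.1 * w.2 ^ g.2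

/-- For `s = Σ c_g u^g ∈ ℤ[u₁^±, u₂^±]`, the function `s_*(w) = Σ c_g χ_g(w)`. -/
noncomputable def polyStar (s : AddMonoidAlgebra ℤ (ℤ × ℤ)) (w : ℂ × ℂ) : ℂ :=
  Finsupp.sum s.coeff fun g c => (c : ℂ) * chi g w

/-- `Ann(f)` : Laurent polynomials annihilating `f` (μ-a.e.). -/
def annSet {X : Type*} [MeasurableSpace X] (μ : Measure X) (T : ℤ × ℤ → X → X)
    (f : X → ℝ) : Set (AddMonoidAlgebra ℤ (ℤ × ℤ)) :=
  {p | polyAct T p f =ᵐ[μ] (fun _ => (0 : ℝ))}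

/-- Two elements `g, h ∈ ℤ²` are proportional if `a • g = b • h` for some nonzero
integers `a, b`. -/
def Proportional (g h : ℤ × ℤ) : Prop :=
  ∃ a b : ℤ, a ≠ 0 ∧ b ≠ 0 ∧ a • g = b • h

/-!
Along almost every orbit `f` restricts to a bounded function `φ : ℤ² → ℤ` killed by `p`. If `q` is
a prime, `p ^ q` is congruent modulo `q` to the dilation of `p` by `q`, so applying this dilation
to `φ` gives a multiple of `q`, bounded by a constant `B` independent of `q`; for `q > B` it
vanishes. Iterating over prime factors, every dilation of `p` by some `k * B! + 1` annihilates `f`.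
At a common zero `w` this reads `∑ c_g χ_g(w) (χ_g(w) ^ B!) ^ k = 0` for all `k`, and by a
Vandermonde argument two of the numbers `χ_g(w) ^ B!` coincide: `w` lies in the kernel of
`B! • (g - h)` for distinct `g`, `h` in the support of `p`. Replacing proportional elements by a
common multiple only enlarges the kernels.
-/

section GroupAlgebra

open scoped AddMonoidAlgebra

section Dilate

variable {k l G : Type*} [CommSemiring k] [CommSemiring l] [AddCommMonoid G]

/-- The dilation `∑ c_g u^g ↦ ∑ c_g u^(r • g)` of a (generalized) Laurent polynomial, as a ring
homomorphism; the analogue of `Polynomial.expand`. -/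
noncomputable def dilate (r : ℕ) : k[G] →+* k[G] :=
  AddMonoidAlgebra.mapDomainRingHom k (nsmulAddMonoidHom r)

lemma coeff_dilate (r : ℕ) (p : k[G]) :
    (dilate r p).coeff = p.coeff.mapDomain (r • ·) := rfl

lemma dilate_one_apply (p : k[G]) : dilate 1 p = p :=
  AddMonoidAlgebra.coeff_injective <| by
    simp only [coeff_dilate, one_smul]
    exact Finsupp.mapDomain_id

lemma dilate_mul_apply (r s : ℕ) (p : k[G]) : dilate (r * s) p = dilate r (dilate s p) :=
  AddMonoidAlgebra.coeff_injective <| by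
    simp [coeff_dilate, ← Finsupp.mapDomain_comp, Function.comp_def, mul_smul]

lemma mapRingHom_dilate (f : k →+* l) (r : ℕ) (p : k[G]) :
    AddMonoidAlgebra.mapRingHom G f (dilate r p) =
      dilate r (AddMonoidAlgebra.mapRingHom G f p) :=
  DFunLike.congr_fun (AddMonoidAlgebra.mapRingHom_comp_mapDomainRingHom f _) p

lemma map_frobenius_dilate (q : ℕ) [ExpChar k q] [ExpChar k[G] q] (p : k[G]) :
    AddMonoidAlgebra.mapRingHom G (frobenius k q) (dilate q p) = p ^ q := by
  suffices (AddMonoidAlgebra.mapRingHom G (frobenius k q)).comp (dilate q) = frobenius k[G] q from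
    DFunLike.congr_fun this p
  ext <;> simp [dilate, frobenius_def, AddMonoidAlgebra.single_pow]

end Dilate

section TranslationAction

variable {k l G : Type*} [CommSemiring k] [CommSemiring l] [AddCommGroup G]

/-- The action of the group algebra `k[G]` on functions `φ : G → k`, where `u^g` translates
`φ` by `g`. -/
noncomputable def translationAction : k[G] →ₐ[k] Module.End k (G → k) :=
  AddMonoidAlgebra.lift k (Module.End k (G → k)) G
    { toFun := fun g => LinearMap.funLeft k k (· - g.toAdd)
      map_one' := by ext; simp
      map_mul' := fun g h => by ext; simp [LinearMap.funLeft, Function.comp_def, sub_sub] }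

lemma translationAction_apply (p : k[G]) (φ : G → k) (h : G) :
    translationAction p φ h = p.coeff.sum fun g c => c * φ (h - g) := by
  simp [translationAction, AddMonoidAlgebra.lift_apply, Finsupp.sum, LinearMap.sum_apply,
    LinearMap.funLeft_apply]

lemma translationAction_dilate_apply (r : ℕ) (p : k[G]) (φ : G → k) (h : G) :
    translationAction (dilate r p) φ h = p.coeff.sum fun g c => c * φ (h - r • g) := by
  rw [translationAction_apply, coeff_dilate, Finsupp.sum_mapDomain_index]
  · simp
  · simp [add_mul]

lemma map_translationAction (f : k →+* l) (p : k[G]) (φ : G → k) (h : G) :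
    f (translationAction p φ h) =
      translationAction (AddMonoidAlgebra.mapRingHom G f p) (f ∘ φ) h := by
  induction p using AddMonoidAlgebra.induction_linear with
  | zero => simp
  | add p q hp hq => simp [hp, hq]
  | single g c => simp [translationAction_apply]

lemma translationAction_pow_eq_zero {p : k[G]} {φ : G → k} (hp : translationAction p φ = 0)
    {n : ℕ} (hn : n ≠ 0) : translationAction (p ^ n) φ = 0 := by
  rw [← Nat.sub_one_add_one hn, pow_succ, map_mul, Module.End.mul_apply, hp, map_zero]

end TranslationAction

section Integer

/-- The `ℓ¹`-norm of the coefficients of an integral (generalized) Laurent polynomial; it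
bounds the values of `p` applied to a bounded function. -/
def coeffNorm {G : Type*} (p : ℤ[G]) : ℕ := p.coeff.sum fun _ c => c.natAbs

variable {G : Type*} [AddCommGroup G] {p : ℤ[G]} {φ : G → ℤ}

lemma prime_dvd_translationAction_dilate {q : ℕ} (hq : q.Prime)
    (hp : translationAction p φ = 0) (h : G) : (q : ℤ) ∣ translationAction (dilate q p) φ h := by
  have : Fact q.Prime := ⟨hq⟩
  have : CharP (ZMod q)[G] q :=
    charP_of_injective_algebraMap (algebraMap (ZMod q) (ZMod q)[G]).injective q
  let reduce := Int.castRingHom (ZMod q)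
  have hp_reduce : translationAction (AddMonoidAlgebra.mapRingHom G reduce p) (reduce ∘ φ) = 0 := by
    ext h
    rw [← map_translationAction, hp, Pi.zero_apply, map_zero, Pi.zero_apply]
  have h_frobenius : AddMonoidAlgebra.mapRingHom G reduce (dilate q p) =
      AddMonoidAlgebra.mapRingHom G reduce p ^ q := by
    rw [mapRingHom_dilate, ← map_frobenius_dilate q, ZMod.frobenius_zmod,
      AddMonoidAlgebra.mapRingHom_id, RingHom.id_apply]
  rw [← ZMod.intCast_zmod_eq_zero_iff_dvd]
  change reduce _ = 0
  rw [map_translationAction, h_frobenius, translationAction_pow_eq_zero hp_reduce hq.ne_zero,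
    Pi.zero_apply]

lemma abs_translationAction_dilate_le {M : ℕ} (hφ : ∀ g, |φ g| ≤ M) (r : ℕ) (h : G) :
    |translationAction (dilate r p) φ h| ≤ (coeffNorm p * M : ℕ) := by
  rw [translationAction_dilate_apply, coeffNorm, Finsupp.sum, Finsupp.sum]
  push_cast
  rw [Finset.sum_mul]
  refine (Finset.abs_sum_le_sum_abs _ _).trans (Finset.sum_le_sum fun g _ => ?_)
  rw [abs_mul]
  gcongr
  exact hφ _

theorem translationAction_dilate_eq_zero {M : ℕ} (hφ : ∀ g, |φ g| ≤ M)
    (hp : translationAction p φ = 0) {r : ℕ} (hr₀ : r ≠ 0)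
    (hr : r.Coprime (coeffNorm p * M).factorial) : translationAction (dilate r p) φ = 0 := by
  induction r using induction_on_primes with
  | zero => exact absurd rfl hr₀
  | one => rwa [dilate_one_apply]
  | prime_mul q a hq ih =>
    have h_dilate : translationAction (dilate a p) φ = 0 :=
      ih (right_ne_zero_of_mul hr₀) hr.coprime_mul_left
    have h_lt : coeffNorm p * M < q := by
      by_contra! hle
      exact Nat.Prime.not_coprime_iff_dvd.2
        ⟨q, hq, dvd_mul_right q a, hq.dvd_factorial.2 hle⟩ hr
    ext h
    refine Int.eq_zero_of_abs_lt_dvd (m := q) ?_ ?_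
    · rw [dilate_mul_apply]
      exact prime_dvd_translationAction_dilate hq h_dilate h
    · exact (abs_translationAction_dilate_le hφ _ h).trans_lt (mod_cast h_lt)

end Integer

end GroupAlgebra

section Annihilator

variable {X : Type*} {T : ℤ × ℤ → X → X} {f : X → ℝ}

lemma polyAct_apply_orbit (hTadd : ∀ g h : ℤ × ℤ, T (g + h) = T g ∘ T h) {x : X}
    {φ : ℤ × ℤ → ℤ} (hφ : ∀ g, f (T g x) = φ g) (p : AddMonoidAlgebra ℤ (ℤ × ℤ)) (h : ℤ × ℤ) :
    polyAct T p f (T h x) = translationAction p φ h := by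
  rw [translationAction_apply, polyAct, Finsupp.sum, Finsupp.sum]
  push_cast
  refine Finset.sum_congr rfl fun g _ => ?_
  rw [← hφ, sub_eq_neg_add, hTadd, Function.comp_apply]

lemma polyAct_dilate_eq_zero_of_orbit (hT0 : T 0 = id)
    (hTadd : ∀ g h : ℤ × ℤ, T (g + h) = T g ∘ T h) {x : X} {M : ℕ}
    (h_int : ∀ g, ∃ n : ℤ, f (T g x) = n) (h_bdd : ∀ g, |f (T g x)| ≤ M)
    {p : AddMonoidAlgebra ℤ (ℤ × ℤ)} (h_ann : ∀ g, polyAct T p f (T g x) = 0)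
    {r : ℕ} (hr₀ : r ≠ 0) (hr : r.Coprime (coeffNorm p * M).factorial) :
    polyAct T (dilate r p) f x = 0 := by
  choose φ hφ using h_int
  have hφ_bdd : ∀ g, |φ g| ≤ M := fun g => by
    have h_cast : |(φ g : ℝ)| ≤ M := (hφ g).symm ▸ h_bdd g
    exact_mod_cast h_cast
  have hφ_ann : translationAction p φ = 0 := by
    ext h
    exact_mod_cast (polyAct_apply_orbit hTadd hφ p h).symm.trans (h_ann h)
  have h_orbit := polyAct_apply_orbit hTadd hφ (dilate r p) 0
  rwa [translationAction_dilate_eq_zero hφ_bdd hφ_ann hr₀ hr, hT0, Pi.zero_apply,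
    Int.cast_zero] at h_orbit

theorem exists_forall_dilate_mem_annSet [MeasurableSpace X] {μ : Measure X}
    (hqmp : ∀ g, Measure.QuasiMeasurePreserving (T g) μ μ) (hT0 : T 0 = id)
    (hTadd : ∀ g h : ℤ × ℤ, T (g + h) = T g ∘ T h)
    (hfbdd : eLpNormEssSup f μ < ⊤) (hfint : ∀ᵐ x ∂μ, ∃ n : ℤ, f x = n)
    {p : AddMonoidAlgebra ℤ (ℤ × ℤ)} (hp : p ∈ annSet μ T f) :
    ∃ N : ℕ, N ≠ 0 ∧ ∀ k : ℕ, dilate (k * N + 1) p ∈ annSet μ T f := by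
  obtain ⟨C, hC⟩ := eLpNormEssSup_lt_top_iff_isBoundedUnder.1 hfbdd
  obtain ⟨M, hCM⟩ := exists_nat_ge C
  have hM : ∀ᵐ x ∂μ, |f x| ≤ M := by
    filter_upwards [Filter.eventually_map.1 hC] with x hx
    exact NNReal.coe_le_coe.2 (hx.trans hCM)
  refine ⟨(coeffNorm p * M).factorial, Nat.factorial_ne_zero _, fun k => ?_⟩
  have h_int : ∀ᵐ x ∂μ, ∀ g, ∃ n : ℤ, f (T g x) = n := ae_all_iff.2 fun g => (hqmp g).ae hfint
  have h_bdd : ∀ᵐ x ∂μ, ∀ g, |f (T g x)| ≤ M := ae_all_iff.2 fun g => (hqmp g).ae hM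
  have h_ann : ∀ᵐ x ∂μ, ∀ g, polyAct T p f (T g x) = 0 := ae_all_iff.2 fun g => (hqmp g).ae hp
  filter_upwards [h_int, h_bdd, h_ann] with x hx_int hx_bdd hx_ann
  exact polyAct_dilate_eq_zero_of_orbit hT0 hTadd hx_int hx_bdd hx_ann (Nat.succ_ne_zero _)
    (by simp)

end Annihilator

lemma eq_zero_of_forall_sum_mul_pow_eq_zero {ι R : Type*} [CommRing R] [IsDomain R]
    {s : Finset ι} {a z : ι → R} (hz : Set.InjOn z s)
    (h : ∀ k : ℕ, ∑ i ∈ s, a i * z i ^ k = 0) {i : ι} (hi : i ∈ s) : a i = 0 := by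
  let e := s.equivFin.symm
  have h_vandermonde : (fun j => a (e j)) = 0 :=
    Matrix.eq_zero_of_forall_pow_sum_mul_pow_eq_zero (f := fun j => z (e j))
      (hz.injective.comp e.injective) fun k => by
        rw [Equiv.sum_comp e fun j : s => a j * z j ^ (k : ℕ), ← h k,
          ← Finset.sum_coe_sort s fun j => a j * z j ^ (k : ℕ)]
  simpa using congrFun h_vandermonde (e.symm ⟨i, hi⟩)

section Character

variable {w : ℂ × ℂ}

lemma chi_zsmul (n : ℤ) (g : ℤ × ℤ) (w : ℂ × ℂ) : chi (n • g) w = chi g w ^ n := by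
  simp [chi, mul_zpow, ← zpow_mul, mul_comm n]

lemma chi_nsmul (n : ℕ) (g : ℤ × ℤ) (w : ℂ × ℂ) : chi (n • g) w = chi g w ^ n := by
  rw [← natCast_zsmul, chi_zsmul, zpow_natCast]

lemma chi_ne_zero (hw₁ : w.1 ≠ 0) (hw₂ : w.2 ≠ 0) (g : ℤ × ℤ) : chi g w ≠ 0 :=
  mul_ne_zero (zpow_ne_zero _ hw₁) (zpow_ne_zero _ hw₂)

lemma chi_sub (hw₁ : w.1 ≠ 0) (hw₂ : w.2 ≠ 0) (g h : ℤ × ℤ) :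
    chi (g - h) w = chi g w / chi h w := by
  simp only [chi, Prod.fst_sub, Prod.snd_sub, zpow_sub₀ hw₁, zpow_sub₀ hw₂, div_mul_div_comm]

lemma polyStar_dilate (r : ℕ) (p : AddMonoidAlgebra ℤ (ℤ × ℤ)) (w : ℂ × ℂ) :
    polyStar (dilate r p) w = ∑ g ∈ p.coeff.support, (p.coeff g : ℂ) * chi g w ^ r := by
  rw [polyStar, coeff_dilate, Finsupp.sum_mapDomain_index (by simp) (by simp [add_mul])]
  simp only [chi_nsmul, Finsupp.sum]

theorem exists_chi_smul_sub_eq_one {p : AddMonoidAlgebra ℤ (ℤ × ℤ)} (hp : p ≠ 0)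
    (hw₁ : w.1 ≠ 0) (hw₂ : w.2 ≠ 0) {N : ℕ}
    (h : ∀ k : ℕ, polyStar (dilate (k * N + 1) p) w = 0) :
    ∃ g ∈ p.coeff.support, ∃ h ∈ p.coeff.support, g ≠ h ∧ chi (N • (g - h)) w = 1 := by
  by_contra! h_ne
  have h_inj : Set.InjOn (fun g => chi g w ^ N) p.coeff.support := by
    intro g hg g' hg' h_eq
    by_contra h_gg'
    refine h_ne g hg g' hg' h_gg' ?_
    rw [chi_nsmul, chi_sub hw₁ hw₂, div_pow,
      div_eq_one_iff_eq (pow_ne_zero _ (chi_ne_zero hw₁ hw₂ g'))]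
    exact h_eq
  have h_sum (k : ℕ) :
      ∑ g ∈ p.coeff.support, (p.coeff g * chi g w) * (chi g w ^ N) ^ k = 0 := by
    rw [← h k, polyStar_dilate]
    exact Finset.sum_congr rfl fun g _ => by ring
  obtain ⟨g, hg⟩ : p.coeff.support.Nonempty :=
    Finsupp.support_nonempty_iff.2 (AddMonoidAlgebra.coeff_eq_zero.not.2 hp)
  have h_zero := eq_zero_of_forall_sum_mul_pow_eq_zero h_inj h_sum hg
  exact mul_ne_zero (Int.cast_ne_zero.2 (Finsupp.mem_support_iff.1 hg))
    (chi_ne_zero hw₁ hw₂ g) h_zero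

end Character

lemma proportional_equivalence : Equivalence Proportional where
  refl g := ⟨1, 1, one_ne_zero, one_ne_zero, rfl⟩
  symm := fun ⟨a, b, ha, hb, h⟩ => ⟨b, a, hb, ha, h.symm⟩
  trans := by
    rintro g h l ⟨a, b, ha, hb, hgh⟩ ⟨c, d, hc, hd, hhl⟩
    refine ⟨c * a, b * d, mul_ne_zero hc ha, mul_ne_zero hb hd, ?_⟩
    rw [mul_smul, hgh, mul_smul, ← hhl, smul_comm]

lemma proportional_smul_left {n : ℤ} (hn : n ≠ 0) (g : ℤ × ℤ) : Proportional (n • g) g :=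
  ⟨1, n, one_ne_zero, hn, one_smul _ _⟩

theorem exists_finset_not_proportional_forall_exists_zsmul_mem (S : Finset (ℤ × ℤ))
    (hS : ∀ g ∈ S, g ≠ 0) :
    ∃ Δ : Finset (ℤ × ℤ), (∀ g ∈ Δ, g ≠ 0) ∧
      (∀ g ∈ Δ, ∀ h ∈ Δ, g ≠ h → ¬ Proportional g h) ∧
      ∀ g ∈ S, ∃ n : ℤ, n • g ∈ Δ := by
  let proportional : Setoid (ℤ × ℤ) := ⟨Proportional, proportional_equivalence⟩
  let rep (g : ℤ × ℤ) : ℤ × ℤ := (Quotient.mk proportional g).out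
  have h_rep (g : ℤ × ℤ) : Proportional (rep g) g := Quotient.mk_out (s := proportional) g
  have h_rep_eq {g h : ℤ × ℤ} (hgh : Proportional g h) : rep g = rep h :=
    congrArg Quotient.out (Quotient.sound (s := proportional) hgh)
  choose a b ha hb hab using fun g => h_rep g
  let L : ℤ := ∏ g ∈ S, a g
  have hL : L ≠ 0 := Finset.prod_ne_zero_iff.2 fun g _ => ha g
  refine ⟨S.image fun g => L • rep g, ?_, ?_, ?_⟩
  · refine Finset.forall_mem_image.2 fun g hg => smul_ne_zero hL fun h_zero => ?_
    refine smul_ne_zero (hb g) (hS g hg) ?_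
    rw [← hab, h_zero, smul_zero]
  · refine Finset.forall_mem_image.2 fun g _ => Finset.forall_mem_image.2 fun h _ h_ne hgh => ?_
    have h_rep_gh : Proportional (rep g) (rep h) :=
      proportional_equivalence.trans
        (proportional_equivalence.symm (proportional_smul_left hL (rep g)))
        (proportional_equivalence.trans hgh (proportional_smul_left hL (rep h)))
    have h_gh : Proportional g h := proportional_equivalence.trans
        (proportional_equivalence.symm (h_rep g))
        (proportional_equivalence.trans h_rep_gh (h_rep h))
    exact h_ne (by rw [h_rep_eq h_gh])
  · intro g hg
    obtain ⟨c, hc⟩ : a g ∣ L := Finset.dvd_prod_of_mem a hg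
    refine ⟨c * b g, Finset.mem_image.2 ⟨g, hg, ?_⟩⟩
    rw [hc, mul_comm, mul_smul, hab, mul_smul]

theorem variety_subset_union_of_kernels_general
    {X : Type*} [MeasurableSpace X] {μ : Measure X} {T : ℤ × ℤ → X → X}
    (hqmp : ∀ g, Measure.QuasiMeasurePreserving (T g) μ μ) (hT0 : T 0 = id)
    (hTadd : ∀ g h : ℤ × ℤ, T (g + h) = T g ∘ T h)
    {f : X → ℝ} (hfbdd : eLpNormEssSup f μ < ⊤) (hfint : ∀ᵐ x ∂μ, ∃ n : ℤ, f x = n)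
    (hann : ∃ p : AddMonoidAlgebra ℤ (ℤ × ℤ), p ≠ 0 ∧ p ∈ annSet μ T f) :
    ∃ Δ : Finset (ℤ × ℤ),
      (∀ g ∈ Δ, g ≠ (0 : ℤ × ℤ)) ∧
      (∀ g ∈ Δ, ∀ h ∈ Δ, g ≠ h → ¬ Proportional g h) ∧
      ∀ w : ℂ × ℂ, w.1 ≠ 0 → w.2 ≠ 0 → (∀ s ∈ annSet μ T f, polyStar s w = 0) →
        ∃ g ∈ Δ, chi g w = 1 := by
  obtain ⟨p, hp₀, hp⟩ := hann
  obtain ⟨N, hN, h_dilate⟩ := exists_forall_dilate_mem_annSet hqmp hT0 hTadd hfbdd hfint hp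
  let S := p.coeff.support.offDiag.image fun x => N • (x.1 - x.2)
  have hS : ∀ g ∈ S, g ≠ 0 := Finset.forall_mem_image.2 fun x hx =>
    smul_ne_zero hN (sub_ne_zero.2 (Finset.mem_offDiag.1 hx).2.2)
  obtain ⟨Δ, hΔ₀, hΔ, hSΔ⟩ := exists_finset_not_proportional_forall_exists_zsmul_mem S hS
  refine ⟨Δ, hΔ₀, hΔ, fun w hw₁ hw₂ hw => ?_⟩
  obtain ⟨g, hg, h, hh, hgh, h_one⟩ :=
    exists_chi_smul_sub_eq_one hp₀ hw₁ hw₂ fun k => hw _ (h_dilate k)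
  have h_mem : N • (g - h) ∈ S :=
    Finset.mem_image.2 ⟨(g, h), Finset.mem_offDiag.2 ⟨hg, hh, hgh⟩, rfl⟩
  obtain ⟨n, hn⟩ := hSΔ _ h_mem
  exact ⟨n • N • (g - h), hn, by rw [chi_zsmul, h_one, one_zpow]⟩

/-- **Lemma 3.2.** Let `(X, μ)` be a probability space with a measure-preserving
`ℤ²`-action `T`, and let `f ∈ L^∞(X)` be integer-valued with `Ann(f) ≠ {0}`. Then
there is a finite set `Δ ⊆ ℤ² ∖ {0}`, no two of whose elements are proportional, such
that `V(Ann(f)) ⊆ K(Δ)`, where `V(I) = {w ∈ 𝕋² : s_*(w) = 0 for all s ∈ I}` and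
`K(Δ) = ⋃_{g ∈ Δ} ker χ_g`. -/
theorem variety_subset_union_of_kernels
    {X : Type*} [MeasurableSpace X] (μ : Measure X) [IsProbabilityMeasure μ]
    (T : ℤ × ℤ → X → X)
    (hmp : ∀ g, MeasurePreserving (T g) μ μ)
    (hT0 : T 0 = id)
    (hTadd : ∀ g h : ℤ × ℤ, T (g + h) = T g ∘ T h)
    (f : X → ℝ) (hfmeas : Measurable f)
    (hfbdd : MemLp f ⊤ μ)
    (hfint : ∀ᵐ x ∂μ, ∃ k : ℤ, f x = (k : ℝ))
    (hann : ∃ p : AddMonoidAlgebra ℤ (ℤ × ℤ), p ≠ 0 ∧ p ∈ annSet μ T f) :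
    ∃ Δ : Finset (ℤ × ℤ),
      (∀ g ∈ Δ, g ≠ (0 : ℤ × ℤ)) ∧
      (∀ g ∈ Δ, ∀ h ∈ Δ, g ≠ h → ¬ Proportional g h) ∧
      {w ∈ torus2 | ∀ s ∈ annSet μ T f, polyStar s w = 0} ⊆
        {w ∈ torus2 | ∃ g ∈ Δ, chi g w = 1} := by
  obtain ⟨Δ, hΔ₀, hΔ, hV⟩ := variety_subset_union_of_kernels_general
    (fun g => (hmp g).quasiMeasurePreserving) hT0 hTadd (by simpa using hfbdd.2) hfint hann
  refine ⟨Δ, hΔ₀, hΔ, fun w ⟨hw, hVw⟩ => ⟨hw, hV w ?_ ?_ hVw⟩⟩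
  exacts [norm_ne_zero_iff.1 (by simp [hw.1]), norm_ne_zero_iff.1 (by simp [hw.2])]
end

section
/- Let (X, μ) be a probability space with an ergodic measure-preserving ℤ²-action, and let A ⊆ X be measurable with Ann(1_A) ≠ {0}. Let Δ ⊆ ℤ² ∖ {0} be a finite set as in the spectral decomposition of 1_A (no two elements of Δ proportional, f₀ = 1_A − Σ_{g∈Δ} (1_A)^g periodic, and (1_A)^{lg} − (1_A)^g periodic for all l ≥ 1, g ∈ Δ). Then there exists a finite index subgroup Λ ⊆ ℤ² such that for each Λ-ergodic component μ_s of μ: the function f₀ is constant μ_s-a.e., and for every g ∈ Δ either exp(2πi·(1_A)^g) is constant μ_s-a.e., or the pushforward of μ_s under exp(2πi·(1_A)^g) is the normalized Haar measure on the unit circle 𝕋 ⊆ ℂ. -/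
open MeasureTheory

/-- The σ-algebra of measurable sets invariant under a map `S : X → X`. -/
def invSigma {X : Type*} [MeasurableSpace X] (S : X → X) : MeasurableSpace X where
  MeasurableSet' A := MeasurableSet A ∧ S ⁻¹' A = A
  measurableSet_empty := ⟨MeasurableSet.empty, by simp⟩
  measurableSet_compl A hA := ⟨hA.1.compl, by rw [Set.preimage_compl, hA.2]⟩
  measurableSet_iUnion A hA := ⟨MeasurableSet.iUnion fun i => (hA i).1, by
    rw [Set.preimage_iUnion]; exact Set.iUnion_congr fun i => (hA i).2⟩

/-- `f^g` : the projection of `f` onto the space of `T g`-invariant functions,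
realized as the conditional expectation with respect to the invariant σ-algebra. -/
noncomputable def invProj {X : Type*} [MeasurableSpace X] (μ : Measure X)
    (T : ℤ × ℤ → X → X) (f : X → ℝ) (g : ℤ × ℤ) : X → ℝ :=
  μ[f | invSigma (T g)]

/-- A function `f` is periodic if `f(g⁻¹ · x) = f(x)` μ-a.e. for every `g` in some
finite index subgroup `Λ ⊆ ℤ²`. -/
def PeriodicFun {X : Type*} [MeasurableSpace X] (μ : Measure X)
    (T : ℤ × ℤ → X → X) (f : X → ℝ) : Prop :=
  ∃ Λ : AddSubgroup (ℤ × ℤ), Λ.FiniteIndex ∧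
    ∀ g ∈ Λ, (fun x => f (T (-g) x)) =ᵐ[μ] f

/-- `Xs` is the family of `Λ`-ergodic components of `(X, μ)` for the `ℤ²`-action `T`. -/
def IsErgodicComponents {X : Type*} [MeasurableSpace X] (μ : Measure X)
    (T : ℤ × ℤ → X → X) (Λ : AddSubgroup (ℤ × ℤ)) {n : ℕ} (Xs : Fin n → Set X) : Prop :=
  (∀ i, MeasurableSet (Xs i)) ∧
  (∀ i, 0 < μ (Xs i)) ∧
  (∀ i j, i ≠ j → μ (Xs i ∩ Xs j) = 0) ∧
  μ (Set.univ \ ⋃ i, Xs i) = 0 ∧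
  (∀ i, ∀ g ∈ Λ, T g ⁻¹' Xs i =ᵐ[μ] Xs i) ∧
  (∀ i, ∀ S : Set X, MeasurableSet S → (∀ g ∈ Λ, T g ⁻¹' S =ᵐ[μ] S) →
    μ (Xs i ∩ S) = 0 ∨ μ (Xs i \ S) = 0)

/-- The normalized Haar (arclength) probability measure on the unit circle
`𝕋 ⊆ ℂ`, as a measure on `ℂ`. -/
noncomputable def circleHaar : Measure ℂ :=
  Measure.map (fun t : ℝ => Complex.exp (2 * Real.pi * Complex.I * (t : ℂ)))
    (volume.restrict (Set.Ioc (0 : ℝ) 1))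

/-
Modulo `ℤ` the indicator function vanishes, so `∑_{g ∈ Δ} (1_A)^g ≡ -f₀` is `Λ₀`-invariant as a
function to `ℝ/ℤ`. Each summand `F_g` is fixed by `g`. For `v ∈ Λ₀` in suitable position, every
`h ∈ Δ ∖ {g}` has a multiple of the form `v + b g`, which acts on `F_g` as `v` does and fixes
`F_h`; eliminating the `F_h` one after the other gives `(v - 1)^k F_g = 0`.

Such an `F_g` is analysed by induction on `k`. The function `D = (v - 1)^(k-1) F_g` is invariant
under `⟨g, v⟩`, which has finite index, so it is constant on finitely many ergodic components.
Where `D` is torsion, of order dividing `n`, one has `(nv - 1)^(k-1) F_g = n^(k-1) D = 0` and the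
induction continues with `nv` in place of `v`. Where `D` is not torsion, van der Corput
differencing shows that the nontrivial Fourier coefficients of the distribution of `F_g` vanish.
-/

section Unipotent

variable {R M : Type*} [Ring R] [AddCommGroup M] [Module R M] {f : Module.End R M} {x : M}

theorem sum_pow_apply_of_apply_eq_self (h : f x = x) (n : ℕ) :
    (∑ i ∈ Finset.range n, f ^ i) x = n • x := by
  have hpow (i : ℕ) : (f ^ i) x = x := by
    rw [Module.End.pow_apply]
    exact Function.iterate_fixed h i
  simp only [LinearMap.sum_apply, hpow, Finset.sum_const, Finset.card_range]

theorem pow_sub_one_pow_apply (n k : ℕ) (h : f (((f - 1) ^ k) x) = ((f - 1) ^ k) x) :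
    ((f ^ n - 1) ^ k) x = n ^ k • ((f - 1) ^ k) x := by
  have hsum (j : ℕ) : ((∑ i ∈ Finset.range n, f ^ i) ^ j) (((f - 1) ^ k) x)
      = n ^ j • ((f - 1) ^ k) x := by
    induction j with
    | zero => simp
    | succ j ih => rw [pow_succ, Module.End.mul_apply, sum_pow_apply_of_apply_eq_self h, map_nsmul,
        ih, smul_smul, pow_succ']
  have hcomm : Commute (∑ i ∈ Finset.range n, f ^ i) (f - 1) :=
    (geom_sum_mul f n).trans (mul_geom_sum f n).symm
  rw [← geom_sum_mul, hcomm.mul_pow, Module.End.mul_apply, hsum]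

theorem sub_one_pow_apply_pow_sub_pow (d i j : ℕ)
    (h : f (((f - 1) ^ (d + 1)) x) = ((f - 1) ^ (d + 1)) x) :
    ((f - 1) ^ d) ((f ^ j) x - (f ^ i) x) = ((j : ℤ) - i) • ((f - 1) ^ (d + 1)) x := by
  have hstep (n : ℕ) : ((f - 1) ^ d) ((f ^ n) x - x) = n • ((f - 1) ^ (d + 1)) x := by
    have hgeom : Commute (∑ i ∈ Finset.range n, f ^ i) (f - 1) :=
      (geom_sum_mul f n).trans (mul_geom_sum f n).symm
    have hcomm : Commute ((f - 1) ^ d) (∑ i ∈ Finset.range n, f ^ i) := hgeom.symm.pow_left d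
    calc ((f - 1) ^ d) ((f ^ n) x - x)
        = (((f - 1) ^ d) * ((∑ i ∈ Finset.range n, f ^ i) * (f - 1))) x := by
          rw [geom_sum_mul]; rfl
      _ = (∑ i ∈ Finset.range n, f ^ i) (((f - 1) ^ (d + 1)) x) := by
          rw [← mul_assoc, hcomm.eq, mul_assoc, ← pow_succ]; rfl
      _ = n • ((f - 1) ^ (d + 1)) x := sum_pow_apply_of_apply_eq_self h n
  rw [← sub_sub_sub_cancel_right _ _ x, map_sub, hstep, hstep, sub_smul, natCast_zsmul,
    natCast_zsmul]

theorem sub_one_pow_card_apply_sum_eq_zero {ι : Type*} {V : Module.End R M}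
    {W : ι → Module.End R M} (hV : ∀ i, Commute V (W i)) (hW : ∀ i j, Commute (W i) (W j))
    (s : Finset ι) (F : ι → M) (hF : ∀ i ∈ s, W i (F i) = F i)
    (hsum : ∀ i ∈ s, W i (∑ j ∈ s, F j) = V (∑ j ∈ s, F j)) :
    ((V - 1) ^ s.card) (∑ j ∈ s, F j) = 0 := by
  classical
  induction s using Finset.induction_on generalizing F with
  | empty => simp
  | insert a s ha ih =>
    have hmem : a ∈ insert a s := Finset.mem_insert_self a s
    -- On the full sum `V - 1` acts as `W a - 1`, which annihilates the summand `F a`.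
    have hdiff : (V - 1) (∑ j ∈ insert a s, F j) = ∑ j ∈ s, (W a - 1) (F j) := by
      calc (V - 1) (∑ j ∈ insert a s, F j) = (W a - 1) (∑ j ∈ insert a s, F j) := by
            simp only [LinearMap.sub_apply, hsum a hmem]
        _ = ∑ j ∈ s, (W a - 1) (F j) := by
            rw [map_sum, Finset.sum_insert ha, LinearMap.sub_apply, hF a hmem,
              Module.End.one_apply, sub_self, zero_add]
    have hcomm {A B : Module.End R M} (h : Commute A B) (y : M) : A (B y) = B (A y) :=
      LinearMap.congr_fun h y
    rw [Finset.card_insert_of_notMem ha, pow_succ, Module.End.mul_apply, hdiff]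
    refine ih _ (fun i hi => ?_) fun i hi => ?_
    · rw [hcomm ((hW i a).sub_right (.one_right _)), hF i (Finset.mem_insert_of_mem hi)]
    · rw [← hdiff, hcomm ((hV i).symm.sub_right (.one_right _)),
        hsum i (Finset.mem_insert_of_mem hi), hcomm ((Commute.refl V).sub_right (.one_right _))]

theorem sub_one_pow_card_add_one_apply_eq_zero {ι : Type*} {V : Module.End R M}
    {W : ι → Module.End R M} (hV : ∀ i, Commute V (W i)) (hW : ∀ i j, Commute (W i) (W j))
    (s : Finset ι) {F : ι → M} (hF : ∀ i ∈ s, W i (F i) = F i) (hx : ∀ i ∈ s, W i x = V x)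
    (hsum : V (x + ∑ i ∈ s, F i) = x + ∑ i ∈ s, F i) : ((V - 1) ^ (s.card + 1)) x = 0 := by
  have hcomm (i : ι) (y : M) : W i ((V - 1) y) = (V - 1) (W i y) :=
    LinearMap.congr_fun ((hV i).symm.sub_right (.one_right _)) y
  have hsum' : ∑ i ∈ s, (V - 1) (F i) = -(V - 1) x := by
    rw [eq_neg_iff_add_eq_zero, add_comm, ← map_sum, ← map_add, LinearMap.sub_apply, hsum,
      Module.End.one_apply, sub_self]
  have hzero := sub_one_pow_card_apply_sum_eq_zero hV hW s (fun i => (V - 1) (F i))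
    (fun i hi => by rw [hcomm, hF i hi]) fun i hi => by
      rw [hsum', map_neg, map_neg, hcomm, hx i hi]
      exact congrArg Neg.neg (LinearMap.congr_fun ((Commute.refl V).sub_left (.one_left _)) x)
  rwa [hsum', map_neg, neg_eq_zero, ← Module.End.mul_apply, ← pow_succ] at hzero

end Unipotent

section Equidistribution

theorem eq_zero_of_orthonormal_of_inner_eq {𝕜 E ι : Type*} [RCLike 𝕜] [SeminormedAddCommGroup E]
    [InnerProductSpace 𝕜 E] [Infinite ι] {v : ι → E} (hv : Orthonormal 𝕜 v) {x : E} {a : 𝕜}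
    (ha : ∀ i, inner 𝕜 (v i) x = a) : a = 0 := by
  have hsum : Summable fun _ : ι => ‖a‖ ^ 2 := by
    simpa only [ha] using hv.inner_products_summable (x := x)
  simpa using (summable_const_iff _).1 hsum

variable {X : Type*} [MeasurableSpace X] {ν : Measure X} {S : X → X}

/-- The Koopman operator of `S` on circle-valued functions, `F ↦ F ∘ S`. Functions are not
identified almost everywhere, so that identities between operators hold pointwise. -/
def koopman {X : Type*} (S : X → X) : Module.End ℤ (X → UnitAddCircle) :=
  LinearMap.funLeft ℤ UnitAddCircle S

theorem koopman_apply {X : Type*} (S : X → X) (F : X → UnitAddCircle) :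
    koopman S F = F ∘ S := rfl

theorem koopman_pow {X : Type*} (S : X → X) (n : ℕ) : koopman S ^ n = koopman S^[n] := by
  induction n with
  | zero => rfl
  | succ n ih =>
    rw [pow_succ', ih, Function.iterate_succ]
    rfl

theorem measurable_koopman_sub_one_pow (hS : Measurable S) {F : X → UnitAddCircle}
    (hF : Measurable F) (k : ℕ) : Measurable (((koopman S - 1) ^ k) F) := by
  induction k with
  | zero => exact hF
  | succ k ih =>
    rw [pow_succ', Module.End.mul_apply]
    exact (ih.comp hS).sub ih

theorem measurable_toCircle_coe :
    Measurable fun t : UnitAddCircle => (AddCircle.toCircle t : ℂ) :=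
  (continuous_subtype_val.comp AddCircle.continuous_toCircle).measurable

theorem integral_toCircle_eq_zero_of_comp_sub_ae_eq_const (hS : MeasurePreserving S ν ν)
    {F : X → UnitAddCircle} (hF : Measurable F) {c : UnitAddCircle} (hc : c ≠ 0)
    (h : F ∘ S - F =ᵐ[ν] fun _ => c) : ∫ x, (AddCircle.toCircle (F x) : ℂ) ∂ν = 0 := by
  have hmul : ∫ x, (AddCircle.toCircle (F x) : ℂ) ∂ν
      = AddCircle.toCircle c * ∫ x, (AddCircle.toCircle (F x) : ℂ) ∂ν := by
    calc ∫ x, (AddCircle.toCircle (F x) : ℂ) ∂ν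
        = ∫ x, (AddCircle.toCircle (F (S x)) : ℂ) ∂ν := by
          have := integral_map hS.aemeasurable (f := fun x => (AddCircle.toCircle (F x) : ℂ))
            (measurable_toCircle_coe.comp hF).aestronglyMeasurable
          rwa [hS.map_eq] at this
      _ = ∫ x, (AddCircle.toCircle c : ℂ) * AddCircle.toCircle (F x) ∂ν := by
          refine integral_congr_ae ?_
          filter_upwards [h] with x hx
          rw [← Circle.coe_mul, ← AddCircle.toCircle_add, ← hx, Pi.sub_apply,
            Function.comp_apply, sub_add_cancel]
      _ = _ := integral_const_mul _ _
  have hne : (AddCircle.toCircle c : ℂ) ≠ 1 := by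
    rwa [ne_eq, Circle.coe_eq_one, ← AddCircle.toCircle_zero (T := 1),
      (AddCircle.injective_toCircle one_ne_zero).eq_iff]
  by_contra hI
  exact hne (mul_right_cancel₀ hI (by rw [← hmul, one_mul]))

theorem not_isOfFinAddOrder_zsmul {G : Type*} [AddGroup G] {c : G} (hc : ¬IsOfFinAddOrder c)
    {n : ℤ} (hn : n ≠ 0) : ¬IsOfFinAddOrder (n • c) := by
  rw [← injective_zsmul_iff_not_isOfFinAddOrder] at hc ⊢
  intro a b hab
  simp only [smul_smul] at hab
  exact mul_right_cancel₀ hn (hc hab)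

variable [IsProbabilityMeasure ν]

theorem integral_eq_zero_of_integral_iterate_mul_conj_eq_zero (hS : MeasurePreserving S ν ν)
    {φ : X → ℂ} (hφ : AEStronglyMeasurable φ ν) (hnorm : ∀ x, ‖φ x‖ = 1)
    (horth : ∀ i j, i ≠ j → ∫ x, φ (S^[j] x) * starRingEnd ℂ (φ (S^[i] x)) ∂ν = 0) :
    ∫ x, φ x ∂ν = 0 := by
  have hmem (j : ℕ) : MemLp (φ ∘ S^[j]) 2 ν :=
    .of_bound (hφ.comp_measurePreserving (hS.iterate j)) 1 (.of_forall fun x => (hnorm _).le)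
  have hinner {f g : X → ℂ} (hf : MemLp f 2 ν) (hg : MemLp g 2 ν) :
      inner ℂ (hf.toLp f) (hg.toLp g) = ∫ x, g x * starRingEnd ℂ (f x) ∂ν := by
    rw [L2.inner_def]
    refine integral_congr_ae ?_
    filter_upwards [hf.coeFn_toLp, hg.coeFn_toLp] with x h₁ h₂
    rw [h₁, h₂, RCLike.inner_apply]
  have horthonormal : Orthonormal ℂ fun j => (hmem j).toLp _ := by
    refine orthonormal_iff_ite.2 fun i j => ?_
    rw [hinner]
    split_ifs with hij
    · subst hij
      simp only [Function.comp_apply, Complex.mul_conj', hnorm, integral_const, probReal_univ]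
      simp
    · exact horth i j hij
  have hconst (j : ℕ) : inner ℂ ((hmem j).toLp _) ((memLp_const (1 : ℂ)).toLp _)
      = starRingEnd ℂ (∫ x, φ x ∂ν) := by
    rw [hinner, ← integral_conj]
    simp only [one_mul, Function.comp_apply]
    have hmap := (hS.iterate j).map_eq
    have := integral_map (hS.iterate j).aemeasurable (f := fun x => starRingEnd ℂ (φ x))
      (by rw [hmap]; exact RCLike.continuous_conj.comp_aestronglyMeasurable hφ)
    rw [← this, hmap]
  exact (map_eq_zero _).1 (eq_zero_of_orthonormal_of_inner_eq horthonormal hconst)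

theorem integral_toCircle_eq_zero_of_koopman_sub_one_pow_ae_eq_const
    (hS : MeasurePreserving S ν ν) (d : ℕ) {F : X → UnitAddCircle} (hF : Measurable F)
    (hfix : koopman S (((koopman S - 1) ^ (d + 1)) F) = ((koopman S - 1) ^ (d + 1)) F)
    {c : UnitAddCircle} (hc : ¬IsOfFinAddOrder c)
    (hconst : ((koopman S - 1) ^ (d + 1)) F =ᵐ[ν] fun _ => c) :
    ∫ x, (AddCircle.toCircle (F x) : ℂ) ∂ν = 0 := by
  induction d generalizing F c with
  | zero =>
    refine integral_toCircle_eq_zero_of_comp_sub_ae_eq_const hS hF ?_ hconst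
    rintro rfl
    exact hc .zero
  | succ d ih =>
    refine integral_eq_zero_of_integral_iterate_mul_conj_eq_zero hS
      (measurable_toCircle_coe.comp hF).aestronglyMeasurable (fun x => Circle.norm_coe _)
      fun i j hij => ?_
    -- van der Corput: the correlations are integrals of functions of lower degree
    have hdiff := sub_one_pow_apply_pow_sub_pow (d + 1) i j hfix
    have hzero := ih (F := (koopman S ^ j) F - (koopman S ^ i) F)
      (c := ((j : ℤ) - i) • c) ?_ ?_ (not_isOfFinAddOrder_zsmul hc (by omega)) ?_
    · rw [← hzero]
      refine integral_congr_ae (.of_forall fun x => ?_)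
      simp only [koopman_pow, koopman_apply, Pi.sub_apply, Function.comp_apply, sub_eq_add_neg,
        AddCircle.toCircle_add, AddCircle.toCircle_neg, Circle.coe_mul, Circle.coe_inv_eq_conj]
    · rw [koopman_pow, koopman_pow]
      exact (hF.comp (hS.iterate j).measurable).sub (hF.comp (hS.iterate i).measurable)
    · rw [hdiff, map_zsmul, hfix]
    · rw [hdiff]
      filter_upwards [hconst] with x hx
      rw [Pi.smul_apply, hx]

theorem measure_ext_of_integral_fourier {T : ℝ} [Fact (0 < T)] {ν₁ ν₂ : Measure (AddCircle T)}
    [IsFiniteMeasure ν₁] [IsFiniteMeasure ν₂]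
    (h : ∀ n : ℤ, ∫ t, fourier n t ∂ν₁ = ∫ t, fourier n t ∂ν₂) : ν₁ = ν₂ := by
  let I (ν : Measure (AddCircle T)) [IsFiniteMeasure ν] : C(AddCircle T, ℂ) →L[ℂ] ℂ :=
    (L1.integralCLM' ℂ).comp (ContinuousMap.toLp 1 ν ℂ)
  have hI (ν : Measure (AddCircle T)) [IsFiniteMeasure ν] (f : C(AddCircle T, ℂ)) :
      I ν f = ∫ t, f t ∂ν := by
    rw [ContinuousLinearMap.comp_apply, ← L1.integral_eq', L1.integral_eq_integral]
    exact integral_congr_ae (ContinuousMap.coeFn_toLp ν f)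
  have hdense : Dense (Submodule.span ℂ (Set.range (@fourier T)) : Set C(AddCircle T, ℂ)) :=
    Submodule.dense_iff_topologicalClosure_eq_top.2 span_fourier_closure_eq_top
  have hII : I ν₁ = I ν₂ := by
    refine ContinuousLinearMap.ext_on hdense ?_
    rintro _ ⟨n, rfl⟩
    rw [hI, hI, h]
  refine ext_of_forall_integral_eq_of_IsFiniteMeasure fun f => ?_
  have hf := DFunLike.congr_fun hII ⟨fun t => (f t : ℂ), by fun_prop⟩
  simp only [hI, ContinuousMap.coe_mk, integral_complex_ofReal] at hf
  exact Complex.ofReal_injective hf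

theorem integral_fourier_eq_zero {n : ℤ} (hn : n ≠ 0) :
    ∫ t : UnitAddCircle, fourier n t = 0 := by
  have h := congrFun (fourierCoeff_fourier (T := 1) n) 0
  rw [Pi.single_eq_of_ne hn.symm, fourierCoeff, AddCircle.integral_haarAddCircle] at h
  simpa using h

theorem map_eq_volume_of_koopman_sub_one_pow_ae_eq_const
    (hS : MeasurePreserving S ν ν) (d : ℕ) {F : X → UnitAddCircle} (hF : Measurable F)
    (hfix : koopman S (((koopman S - 1) ^ (d + 1)) F) = ((koopman S - 1) ^ (d + 1)) F)
    {c : UnitAddCircle} (hc : ¬IsOfFinAddOrder c)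
    (hconst : ((koopman S - 1) ^ (d + 1)) F =ᵐ[ν] fun _ => c) :
    ν.map F = volume := by
  have : IsProbabilityMeasure (ν.map F) := Measure.isProbabilityMeasure_map hF.aemeasurable
  refine measure_ext_of_integral_fourier fun n => ?_
  rcases eq_or_ne n 0 with rfl | hn
  · simp [Measure.real]
  rw [integral_fourier_eq_zero hn,
    integral_map hF.aemeasurable (fourier n).continuous.aestronglyMeasurable]
  simp only [fourier_apply]
  refine integral_toCircle_eq_zero_of_koopman_sub_one_pow_ae_eq_const hS d
    (F := n • F) (hF.const_smul n) ?_ (not_isOfFinAddOrder_zsmul hc hn) ?_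
  · rw [map_zsmul, map_zsmul, hfix]
  · rw [map_zsmul]
    filter_upwards [hconst] with x hx
    rw [Pi.smul_apply, hx]

end Equidistribution

section Actions

variable {X G : Type*} [MeasurableSpace X] {μ : Measure X} [AddCommGroup G] {T : G → X → X}

/-- A measure-preserving action of the group `G` on `(X, μ)`, given as a family of maps. -/
structure IsMPAction (μ : Measure X) (T : G → X → X) : Prop where
  zero : T 0 = id
  add : ∀ g h, T (g + h) = T g ∘ T h
  measurePreserving : ∀ g, MeasurePreserving (T g) μ μ

/-- `S` is invariant modulo `μ`-null sets under the elements of the subgroup `Λ`. -/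
def IsAEInvariant (μ : Measure X) (T : G → X → X) (Λ : AddSubgroup G) (S : Set X) : Prop :=
  ∀ g ∈ Λ, T g ⁻¹' S =ᵐ[μ] S

/-- A measure-preserving action of `G` all of whose almost invariant measurable sets are null or
of measure one. -/
structure IsErgodicAction (μ : Measure X) (T : G → X → X) : Prop extends IsMPAction μ T where
  ergodic : ∀ S, MeasurableSet S → (∀ g, T g ⁻¹' S =ᵐ[μ] S) → μ S = 0 ∨ μ S = 1

/-- An atom of the `σ`-algebra of `Λ`-invariant sets, i.e. a `Λ`-ergodic component. -/
structure IsErgodicAtom (μ : Measure X) (T : G → X → X) (Λ : AddSubgroup G) (Y : Set X) :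
    Prop where
  measurableSet : MeasurableSet Y
  measure_ne_zero : μ Y ≠ 0
  invariant : IsAEInvariant μ T Λ Y
  null_or_full : ∀ S, MeasurableSet S → IsAEInvariant μ T Λ S → μ (Y ∩ S) = 0 ∨ μ (Y \ S) = 0

theorem IsMPAction.iterate (hT : IsMPAction μ T) (g : G) (n : ℕ) : (T g)^[n] = T (n • g) := by
  induction n with
  | zero => rw [zero_nsmul, hT.zero, Function.iterate_zero]
  | succ n ih => rw [Function.iterate_succ, ih, succ_nsmul, hT.add]

theorem IsMPAction.comm (hT : IsMPAction μ T) (g h : G) : T g ∘ T h = T h ∘ T g := by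
  rw [← hT.add, ← hT.add, add_comm]

theorem IsMPAction.exists_invariant_measurableSet_of_ae [Countable G] (hT : IsMPAction μ T)
    {p : X → Prop} (hp : ∀ᵐ x ∂μ, p x) :
    ∃ Z, MeasurableSet Z ∧ (∀ g, T g ⁻¹' Z = Z) ∧ (∀ᵐ x ∂μ, x ∈ Z) ∧ ∀ x ∈ Z, p x := by
  obtain ⟨s, hs, hsm, hsp⟩ := hp.exists_measurable_mem
  refine ⟨⋂ g, T g ⁻¹' s, .iInter fun g => (hT.measurePreserving g).measurable hsm,
    fun h => ?_, ?_, fun x hx => hsp x ?_⟩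
  · simp only [Set.preimage_iInter, ← Set.preimage_comp, ← hT.add]
    exact (add_right_surjective h).iInter_comp fun g => T g ⁻¹' s
  · simp only [Set.mem_iInter, ae_all_iff]
    exact fun g => (hT.measurePreserving g).quasiMeasurePreserving.ae hs
  · simpa [hT.zero] using Set.mem_iInter.1 hx 0

theorem IsAEInvariant.inter {Λ : AddSubgroup G} {S S' : Set X} (h : IsAEInvariant μ T Λ S)
    (h' : IsAEInvariant μ T Λ S') : IsAEInvariant μ T Λ (S ∩ S') :=
  fun g hg => (h g hg).inter (h' g hg)

theorem IsAEInvariant.diff {Λ : AddSubgroup G} {S S' : Set X} (h : IsAEInvariant μ T Λ S)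
    (h' : IsAEInvariant μ T Λ S') : IsAEInvariant μ T Λ (S \ S') :=
  fun g hg => (h g hg).diff (h' g hg)

theorem IsErgodicAction.one_le_index_mul_measure [Countable G] (hT : IsErgodicAction μ T)
    {Λ : AddSubgroup G} [Λ.FiniteIndex] {S : Set X} (hS : MeasurableSet S)
    (hinv : IsAEInvariant μ T Λ S) (h0 : μ S ≠ 0) : 1 ≤ Λ.index * μ S := by
  have hmeas (g : G) : μ (T g ⁻¹' S) = μ S :=
    (hT.measurePreserving g).measure_preimage hS.nullMeasurableSet
  have hone : μ (⋃ g, T g ⁻¹' S) = 1 := by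
    refine (hT.ergodic _ (.iUnion fun g => (hT.measurePreserving g).measurable hS)
      fun h => .of_eq ?_).resolve_left fun h => h0 ?_
    · simp only [Set.preimage_iUnion, ← Set.preimage_comp, ← hT.add]
      exact (add_right_surjective h).iUnion_comp fun g => T g ⁻¹' S
    · rw [← hmeas 0]
      exact measure_mono_null (Set.subset_iUnion (fun g => T g ⁻¹' S) 0) h
  have hcoset (g : G) :
      T g ⁻¹' S ≤ᵐ[μ] ⋃ q : G ⧸ Λ, T q.out ⁻¹' S := by
    have hmem : -(g : G ⧸ Λ).out + g ∈ Λ := QuotientAddGroup.eq.1 (Quotient.out_eq' _)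
    have hg : T g = T (-(g : G ⧸ Λ).out + g) ∘ T (g : G ⧸ Λ).out := by
      rw [← hT.add, neg_add_cancel_comm]
    rw [hg, Set.preimage_comp]
    exact ((hT.measurePreserving _).quasiMeasurePreserving.preimage_ae_eq (hinv _ hmem)).le.trans
      (.of_forall (Set.subset_iUnion (fun q : G ⧸ Λ => T q.out ⁻¹' S) g))
  have hle : (⋃ g, T g ⁻¹' S : Set X) ≤ᵐ[μ] (⋃ q : G ⧸ Λ, T q.out ⁻¹' S : Set X) := by
    filter_upwards [ae_all_iff.2 hcoset] with x hx hmem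
    obtain ⟨g, hg⟩ := Set.mem_iUnion.1 hmem
    exact hx g hg
  have := Fintype.ofFinite (G ⧸ Λ)
  calc 1 = μ (⋃ g, T g ⁻¹' S) := hone.symm
    _ ≤ μ (⋃ q : G ⧸ Λ, T q.out ⁻¹' S) := measure_mono_ae hle
    _ ≤ ∑ q : G ⧸ Λ, μ (T q.out ⁻¹' S) := measure_iUnion_fintype_le _ _
    _ = Λ.index * μ S := by
        simp only [hmeas, Finset.sum_const, Finset.card_univ, nsmul_eq_mul, AddSubgroup.index,
          Nat.card_eq_fintype_card]

theorem exists_finite_disjoint_ergodicAtoms {Λ : AddSubgroup G} {a : ENNReal}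
    (ha : ∀ S, MeasurableSet S → IsAEInvariant μ T Λ S → μ S ≠ 0 → 1 ≤ a * μ S)
    (n : ℕ) {B : Set X} (hB : MeasurableSet B) (hinv : IsAEInvariant μ T Λ B)
    (hn : a * μ B < n) :
    ∃ C : Set (Set X), C.Finite ∧ C.PairwiseDisjoint id ∧ (∀ Y ∈ C, Y ⊆ B) ∧
      (∀ Y ∈ C, IsErgodicAtom μ T Λ Y) ∧ μ (B \ ⋃₀ C) = 0 := by
  induction n generalizing B with
  | zero => simp at hn
  | succ n ih =>
    by_cases h0 : μ B = 0
    · exact ⟨∅, by simp [h0]⟩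
    by_cases hatom : IsErgodicAtom μ T Λ B
    · exact ⟨{B}, by simp [hatom]⟩
    obtain ⟨S, hS, hSinv, hin, hout⟩ : ∃ S, MeasurableSet S ∧ IsAEInvariant μ T Λ S ∧
        μ (B ∩ S) ≠ 0 ∧ μ (B \ S) ≠ 0 := by
      by_contra! h
      exact hatom ⟨hB, h0, hinv, fun S hS hSinv => or_iff_not_imp_left.2 (h S hS hSinv)⟩
    have hsplit : a * μ (B ∩ S) + a * μ (B \ S) = a * μ B := by
      rw [← mul_add, measure_inter_add_sdiff B hS]
    have hlt {b c : ENNReal} (hbc : b + c = a * μ B) (hc : 1 ≤ c) : b < n := by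
      refine lt_of_add_lt_add_right ((add_le_add_right hc b).trans_lt ?_)
      rwa [hbc, ← Nat.cast_succ]
    obtain ⟨C₁, hfin₁, hdisj₁, hsub₁, hatom₁, hcov₁⟩ :=
      ih (hB.inter hS) (hinv.inter hSinv)
        (hlt hsplit (ha _ (hB.diff hS) (hinv.diff hSinv) hout))
    obtain ⟨C₂, hfin₂, hdisj₂, hsub₂, hatom₂, hcov₂⟩ :=
      ih (hB.diff hS) (hinv.diff hSinv)
        (hlt ((add_comm _ _).trans hsplit) (ha _ (hB.inter hS) (hinv.inter hSinv) hin))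
    refine ⟨C₁ ∪ C₂, hfin₁.union hfin₂, hdisj₁.union hdisj₂ fun Y hY Y' hY' _ => ?_, ?_, ?_, ?_⟩
    · exact Set.disjoint_of_subset ((hsub₁ Y hY).trans Set.inter_subset_right) (hsub₂ Y' hY')
        Set.disjoint_sdiff_right
    · rintro Y (hY | hY)
      · exact (hsub₁ Y hY).trans Set.inter_subset_left
      · exact (hsub₂ Y hY).trans Set.sdiff_subset
    · rintro Y (hY | hY)
      exacts [hatom₁ Y hY, hatom₂ Y hY]
    · refine measure_mono_null (fun x hx => ?_) (measure_union_null hcov₁ hcov₂)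
      rw [Set.sUnion_union] at hx
      by_cases hxS : x ∈ S
      · exact .inl ⟨⟨hx.1, hxS⟩, fun h => hx.2 (.inl h)⟩
      · exact .inr ⟨⟨hx.1, hxS⟩, fun h => hx.2 (.inr h)⟩

theorem IsErgodicAction.exists_ergodicAtoms [Countable G] [IsProbabilityMeasure μ]
    (hT : IsErgodicAction μ T) (Λ : AddSubgroup G) [Λ.FiniteIndex] :
    ∃ (n : ℕ) (Xs : Fin n → Set X), (∀ i j, i ≠ j → Disjoint (Xs i) (Xs j)) ∧
      (∀ i, IsErgodicAtom μ T Λ (Xs i)) ∧ ∀ᵐ x ∂μ, ∃ i, x ∈ Xs i := by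
  have hlt : (Λ.index : ENNReal) * μ Set.univ < (Λ.index + 1 : ℕ) := by
    rw [measure_univ, mul_one]
    exact_mod_cast Λ.index.lt_succ_self
  obtain ⟨C, hfin, hdisj, -, hatom, hcov⟩ := exists_finite_disjoint_ergodicAtoms
    (fun S => hT.one_le_index_mul_measure) (Λ.index + 1) .univ (fun g _ => .rfl) hlt
  obtain ⟨n, Xs, hinj, rfl⟩ := hfin.fin_param
  refine ⟨n, Xs, fun i j hij => hdisj ⟨i, rfl⟩ ⟨j, rfl⟩ (hinj.ne hij),
    fun i => hatom _ ⟨i, rfl⟩, ?_⟩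
  rw [ae_iff]
  convert hcov using 2
  ext x
  simp

open ProbabilityTheory

theorem ae_cond_eq_ae_restrict [IsFiniteMeasure μ] (Y : Set X) : ae μ[|Y] = ae (μ.restrict Y) :=
  Measure.ae_ennreal_smul_measure_eq (ENNReal.inv_ne_zero.2 (measure_ne_top _ _)) _

theorem ae_cond_iff [IsFiniteMeasure μ] {Y : Set X} (hY : MeasurableSet Y) {p : X → Prop} :
    (∀ᵐ x ∂μ[|Y], p x) ↔ ∀ᵐ x ∂μ, x ∈ Y → p x := by
  rw [ae_cond_eq_ae_restrict, ae_restrict_iff' hY]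

namespace IsErgodicAtom

variable {Λ : AddSubgroup G} {Y : Set X}

theorem measurePreserving_cond (hT : IsMPAction μ T) (hY : IsErgodicAtom μ T Λ Y) {g : G}
    (hg : g ∈ Λ) : MeasurePreserving (T g) μ[|Y] μ[|Y] := by
  have h := (hT.measurePreserving g).restrict_preimage hY.measurableSet
  rw [Measure.restrict_congr_set (hY.invariant g hg)] at h
  exact h.smul_measure _

variable [IsFiniteMeasure μ]

theorem ae_mem_or_ae_notMem (hY : IsErgodicAtom μ T Λ Y) {S : Set X} (hS : MeasurableSet S)
    (hinv : IsAEInvariant μ T Λ S) : (∀ᵐ x ∂μ[|Y], x ∈ S) ∨ ∀ᵐ x ∂μ[|Y], x ∉ S := by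
  simp only [ae_cond_iff hY.measurableSet]
  rcases hY.null_or_full S hS hinv with h | h <;> rw [measure_eq_zero_iff_ae_notMem] at h
  · exact .inr (h.mono fun x hx hxY hxS => hx ⟨hxY, hxS⟩)
  · exact .inl (h.mono fun x hx hxY => not_not.1 fun hxS => hx ⟨hxY, hxS⟩)

theorem exists_ae_eq_const {E : Type*} [MeasurableSpace E] [MeasurableSpace.CountablySeparated E]
    [Nonempty E] (hY : IsErgodicAtom μ T Λ Y) {f : X → E} (hf : Measurable f)
    (hinv : ∀ g ∈ Λ, f ∘ T g =ᵐ[μ] f) : ∃ c, f =ᵐ[μ[|Y]] fun _ => c := by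
  refine Filter.exists_eventuallyEq_const_of_forall_separating MeasurableSet fun U hU =>
    hY.ae_mem_or_ae_notMem (hf hU) fun g hg => ?_
  filter_upwards [hinv g hg] with x hx
  exact congrArg (· ∈ U) hx

theorem exists_ae_eq_const_of_aemeasurable {E : Type*} [MeasurableSpace E]
    [MeasurableSpace.CountablySeparated E] [Nonempty E] (hT : IsMPAction μ T)
    (hY : IsErgodicAtom μ T Λ Y) {f : X → E} (hf : AEMeasurable f μ)
    (hinv : ∀ g ∈ Λ, f ∘ T g =ᵐ[μ] f) : ∃ c, f =ᵐ[μ[|Y]] fun _ => c := by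
  obtain ⟨c, hc⟩ := hY.exists_ae_eq_const hf.measurable_mk fun g hg =>
    ((hT.measurePreserving g).quasiMeasurePreserving.ae_eq_comp hf.ae_eq_mk.symm).trans
      ((hinv g hg).trans hf.ae_eq_mk)
  exact ⟨c, (cond_absolutelyContinuous.ae_eq hf.ae_eq_mk).trans hc⟩

end IsErgodicAtom

end Actions

section Lattice

theorem finiteIndex_of_forall_exists_zsmul_mem {G : Type*} [AddCommGroup G] [AddGroup.FG G]
    {H : AddSubgroup G} (h : ∀ x : G, ∃ n : ℤ, n ≠ 0 ∧ n • x ∈ H) : H.FiniteIndex := by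
  have htors : IsAddTorsion (G ⧸ H) := fun q => by
    obtain ⟨x, rfl⟩ := QuotientAddGroup.mk_surjective q
    obtain ⟨n, hn, hmem⟩ := h x
    exact isOfFinAddOrder_iff_zsmul_eq_zero.2
      ⟨n, hn, (QuotientAddGroup.eq_zero_iff (n • x)).2 hmem⟩
  have := AddCommGroup.finite_of_fg_isAddTorsion _ htors
  exact AddSubgroup.finiteIndex_of_finite_quotient

theorem finiteIndex_sup_zmultiples_nsmul {G : Type*} [AddCommGroup G] [AddGroup.FG G]
    {H : AddSubgroup G} {v : G} (h : (H ⊔ .zmultiples v).FiniteIndex) {n : ℕ} (hn : n ≠ 0) :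
    (H ⊔ .zmultiples (n • v)).FiniteIndex := by
  refine finiteIndex_of_forall_exists_zsmul_mem fun x =>
    ⟨(n * (H ⊔ .zmultiples v).index : ℕ), by exact_mod_cast mul_ne_zero hn h.index_ne_zero, ?_⟩
  obtain ⟨y, hy, z, ⟨m, rfl⟩, hyz⟩ := AddSubgroup.mem_sup.1
    ((H ⊔ .zmultiples v).nsmul_index_mem x)
  rw [natCast_zsmul, mul_nsmul', ← hyz, nsmul_add]
  exact AddSubgroup.add_mem_sup (H.nsmul_mem hy n) ⟨m, by simp only [smul_comm m n]⟩

/-- The determinant of the pair `v, w`, which vanishes exactly when `v` and `w` are collinear. -/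
def cross (v w : ℤ × ℤ) : ℤ := v.1 * w.2 - v.2 * w.1

theorem cross_zsmul_eq (v w x : ℤ × ℤ) : cross v w • x = cross x w • v + cross v x • w := by
  ext <;> simp [cross] <;> ring

theorem cross_zsmul_left (n : ℤ) (v w : ℤ × ℤ) : cross (n • v) w = n * cross v w := by
  simp only [cross, Prod.smul_fst, Prod.smul_snd, smul_eq_mul]
  ring

theorem cross_ne_zero_of_not_proportional {v w : ℤ × ℤ} (hv : v ≠ 0) (hw : w ≠ 0)
    (h : ¬Proportional v w) : cross v w ≠ 0 := by
  intro hcross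
  have hcross' : v.1 * w.2 = v.2 * w.1 := sub_eq_zero.1 hcross
  have hcoord {a b : ℤ} (hab : a • v = b • w) : b = 0 := by
    by_contra hb
    refine h ⟨a, b, fun ha => ?_, hb, hab⟩
    rw [ha, zero_smul, eq_comm, smul_eq_zero] at hab
    exact hab.elim hb hw
  refine hv (Prod.ext (hcoord (a := w.1) ?_) (hcoord (a := w.2) ?_)) <;>
  · simp only [Prod.ext_iff, Prod.smul_fst, Prod.smul_snd, smul_eq_mul]
    constructor <;> linarith

theorem finiteIndex_zmultiples_sup_zmultiples {v w : ℤ × ℤ} (h : cross v w ≠ 0) :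
    (AddSubgroup.zmultiples v ⊔ .zmultiples w).FiniteIndex := by
  refine finiteIndex_of_forall_exists_zsmul_mem fun x =>
    ⟨cross v w, h, ?_⟩
  rw [cross_zsmul_eq]
  exact AddSubgroup.add_mem_sup ⟨_, rfl⟩ ⟨_, rfl⟩

theorem exists_mem_forall_exists_add_zsmul_eq_zsmul {Λ : AddSubgroup (ℤ × ℤ)} [Λ.FiniteIndex]
    {g : ℤ × ℤ} (hg : g ≠ 0) {s : Finset (ℤ × ℤ)} (hs : ∀ h ∈ s, cross h g ≠ 0) :
    ∃ v ∈ Λ, cross v g ≠ 0 ∧ ∀ h ∈ s, ∃ b k : ℤ, v + b • g = k • h := by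
  obtain ⟨e, he⟩ : ∃ e, cross e g ≠ 0 := by
    by_contra! h
    exact hg (Prod.ext (by simpa [cross] using h (0, 1)) (by simpa [cross] using h (1, 0)))
  refine ⟨Λ.index • (∏ h ∈ s, cross h g) • e, Λ.nsmul_index_mem _, ?_, fun h hh => ?_⟩
  · rw [← natCast_zsmul, cross_zsmul_left, cross_zsmul_left]
    exact mul_ne_zero (by exact_mod_cast AddSubgroup.FiniteIndex.index_ne_zero)
      (mul_ne_zero (Finset.prod_ne_zero_iff.2 hs) he)
  · obtain ⟨m, hm⟩ := Finset.dvd_prod_of_mem (cross · g) hh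
    refine ⟨-(Λ.index * m * cross h e), Λ.index * m * cross e g, ?_⟩
    have hcramer := cross_zsmul_eq h g e
    calc Λ.index • (∏ h ∈ s, cross h g) • e + -(Λ.index * m * cross h e) • g
        = (Λ.index * m : ℤ) • (cross h g • e) + -(Λ.index * m * cross h e) • g := by
          rw [hm]
          module
      _ = (Λ.index * m * cross e g : ℤ) • h := by
          rw [hcramer]
          module

end Lattice

section Dichotomy

open ProbabilityTheory

variable {X G : Type*} [MeasurableSpace X] [AddCommGroup G] {T : G → X → X} {μ ν : Measure X}
  {F F' : X → UnitAddCircle}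

/-- The alternative of the theorem for one circle-valued function: `F` is constant, or its
distribution is the Haar measure of the circle. -/
def IsConstOrHaar (ν : Measure X) (F : X → UnitAddCircle) : Prop :=
  (∃ c, F =ᵐ[ν] fun _ => c) ∨ ν.map F = volume

/-- `F` is constant or equidistributed on the ergodic components of every sufficiently small
finite index subgroup. Quantifying over all smaller subgroups allows several functions to be
treated with the same subgroup. -/
def IsVirtuallyConstOrHaar (μ : Measure X) (T : G → X → X) (F : X → UnitAddCircle) : Prop :=
  ∃ Λ : AddSubgroup G, Λ.FiniteIndex ∧ ∀ Λ' ≤ Λ, Λ'.FiniteIndex →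
    ∀ Y, IsErgodicAtom μ T Λ' Y → IsConstOrHaar μ[|Y] F

theorem IsConstOrHaar.congr (h : IsConstOrHaar ν F) (hF : F =ᵐ[ν] F') : IsConstOrHaar ν F' := by
  refine h.imp (fun ⟨c, hc⟩ => ⟨c, hF.symm.trans hc⟩) fun hmap => ?_
  rwa [← Measure.map_congr hF]

theorem IsVirtuallyConstOrHaar.congr (h : IsVirtuallyConstOrHaar μ T F) (hF : F =ᵐ[μ] F') :
    IsVirtuallyConstOrHaar μ T F' :=
  let ⟨Λ, hΛ, hY⟩ := h
  ⟨Λ, hΛ, fun Λ' hle hΛ' Y hYatom =>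
    (hY Λ' hle hΛ' Y hYatom).congr (cond_absolutelyContinuous.ae_eq hF)⟩

theorem IsVirtuallyConstOrHaar.exists_common {ι : Type*} {F : ι → X → UnitAddCircle}
    {s : Finset ι}
    (h : ∀ i ∈ s, IsVirtuallyConstOrHaar μ T (F i)) (Λ₀ : AddSubgroup G) [Λ₀.FiniteIndex] :
    ∃ Λ ≤ Λ₀, Λ.FiniteIndex ∧
      ∀ i ∈ s, ∀ Y, IsErgodicAtom μ T Λ Y → IsConstOrHaar μ[|Y] (F i) := by
  choose! L hL hLF using h
  have := AddSubgroup.finiteIndex_iInf' L hL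
  exact ⟨Λ₀ ⊓ ⨅ i ∈ s, L i, inf_le_left, inferInstance, fun i hi =>
    hLF i hi _ (inf_le_right.trans (iInf₂_le i hi)) inferInstance⟩

theorem IsMPAction.koopman_nsmul (hT : IsMPAction μ T) (n : ℕ) (v : G) :
    koopman (T (n • v)) = koopman (T v) ^ n := by
  rw [koopman_pow, hT.iterate]

theorem IsMPAction.commute_koopman (hT : IsMPAction μ T) (g h : G) :
    Commute (koopman (T g)) (koopman (T h)) :=
  LinearMap.ext fun F => congrArg (F ∘ ·) (hT.comm h g)

/-- The subgroup of those `g` whose Koopman operator fixes the function `F` everywhere. -/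
def IsMPAction.stabilizer (hT : IsMPAction μ T) (F : X → UnitAddCircle) : AddSubgroup G where
  carrier := {g | koopman (T g) F = F}
  zero_mem' := congrArg (F ∘ ·) hT.zero
  add_mem' {g h} (hg : F ∘ T g = F) (hh : F ∘ T h = F) := show F ∘ T (g + h) = F by
    rw [hT.add, ← Function.comp_assoc, hg, hh]
  neg_mem' {g} (hg : F ∘ T g = F) := show F ∘ T (-g) = F by
    conv_lhs => rw [← hg]
    rw [Function.comp_assoc, ← hT.add, add_neg_cancel, hT.zero, Function.comp_id]

theorem IsMPAction.stabilizer_le_stabilizer_koopman_sub_one_pow (hT : IsMPAction μ T) (v : G)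
    (k : ℕ) : hT.stabilizer F ≤ hT.stabilizer (((koopman (T v) - 1) ^ k) F) := by
  intro h (hh : koopman (T h) F = F)
  have hcomm : Commute (koopman (T h)) ((koopman (T v) - 1) ^ k) :=
    ((hT.commute_koopman h v).sub_right (.one_right _)).pow_right _
  calc koopman (T h) (((koopman (T v) - 1) ^ k) F)
      = ((koopman (T v) - 1) ^ k) (koopman (T h) F) := LinearMap.congr_fun hcomm F
    _ = ((koopman (T v) - 1) ^ k) F := by rw [hh]

theorem koopman_indicator {X : Type*} {S : X → X} {R : Set X} (hR : S ⁻¹' R = R)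
    (F : X → UnitAddCircle) : koopman S (R.indicator F) = R.indicator (koopman S F) := by
  conv_rhs => rw [← hR]
  exact funext fun x => (Set.indicator_comp_right S).symm

theorem koopman_sub_one_pow_indicator {X : Type*} {S : X → X} {R : Set X} (hR : S ⁻¹' R = R)
    (F : X → UnitAddCircle) (k : ℕ) :
    ((koopman S - 1) ^ k) (R.indicator F) = R.indicator (((koopman S - 1) ^ k) F) := by
  induction k generalizing F with
  | zero => rfl
  | succ k ih =>
    rw [pow_succ, Module.End.mul_apply, Module.End.mul_apply, ← ih, LinearMap.sub_apply,
      LinearMap.sub_apply, koopman_indicator hR, Module.End.one_apply, Module.End.one_apply,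
      Set.indicator_sub']

theorem koopman_pow_sub_one_pow_indicator_eq_zero {X : Type*} {S : X → X} {F : X → UnitAddCircle}
    {R : Set X} (hR : S ⁻¹' R = R) {n k : ℕ}
    (hfix : koopman S (((koopman S - 1) ^ (k + 1)) F) = ((koopman S - 1) ^ (k + 1)) F)
    (hzero : ∀ x ∈ R, n • ((koopman S - 1) ^ (k + 1)) F x = 0) :
    ((koopman S ^ n - 1) ^ (k + 1)) (R.indicator F) = 0 := by
  have hind := koopman_sub_one_pow_indicator hR F (k + 1)
  rw [pow_sub_one_pow_apply n (k + 1) (by rw [hind, koopman_indicator hR, hfix]), hind]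
  funext x
  rw [Pi.smul_apply, Pi.zero_apply, pow_succ, mul_smul]
  refine (congrArg (n ^ k • ·) ?_).trans (smul_zero _)
  by_cases hx : x ∈ R
  · rw [Set.indicator_of_mem hx, hzero x hx]
  · rw [Set.indicator_of_notMem hx, smul_zero]

theorem IsErgodicAction.exists_nsmul_eq_zero_of_isOfFinAddOrder [Countable G]
    [IsProbabilityMeasure μ] (hT : IsErgodicAction μ T) {Λ : AddSubgroup G} [Λ.FiniteIndex]
    (hF : Measurable F) (hinv : Λ ≤ hT.stabilizer F) :
    ∃ n : ℕ, n ≠ 0 ∧ ∀ᵐ x ∂μ, IsOfFinAddOrder (F x) → n • F x = 0 := by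
  classical
  obtain ⟨N, Xs, -, hatom, hcov⟩ := hT.exists_ergodicAtoms Λ
  choose c hc using fun i => (hatom i).exists_ae_eq_const hF fun g hg => .of_eq (hinv hg)
  refine ⟨∏ i with IsOfFinAddOrder (c i), addOrderOf (c i), ?_, ?_⟩
  · exact Finset.prod_ne_zero_iff.2 fun i hi => (Finset.mem_filter.1 hi).2.addOrderOf_pos.ne'
  · have hval (i : Fin N) : ∀ᵐ x ∂μ, x ∈ Xs i → F x = c i :=
      (ae_cond_iff (hatom i).measurableSet).1 (hc i)
    filter_upwards [hcov, ae_all_iff.2 hval] with x ⟨i, hi⟩ hx hfin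
    rw [hx i hi] at hfin ⊢
    exact addOrderOf_dvd_iff_nsmul_eq_zero.1
      (Finset.dvd_prod_of_mem _ (Finset.mem_filter.2 ⟨Finset.mem_univ i, hfin⟩))

theorem IsErgodicAtom.map_cond_eq_volume [IsFiniteMeasure μ]
    (hT : IsMPAction μ T) {Λ : AddSubgroup G} [Λ.FiniteIndex] {Y : Set X}
    (hY : IsErgodicAtom μ T Λ Y) (v : G) (d : ℕ) (hF : Measurable F)
    (hfix : koopman (T v) (((koopman (T v) - 1) ^ (d + 1)) F) = ((koopman (T v) - 1) ^ (d + 1)) F)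
    (hinv : Λ ≤ hT.stabilizer (((koopman (T v) - 1) ^ (d + 1)) F))
    (hinf : ∀ᵐ x ∂μ[|Y], ¬IsOfFinAddOrder (((koopman (T v) - 1) ^ (d + 1)) F x)) :
    μ[|Y].map F = volume := by
  have := cond_isProbabilityMeasure hY.measure_ne_zero
  obtain ⟨c, hconst⟩ := hY.exists_ae_eq_const
    (measurable_koopman_sub_one_pow (hT.measurePreserving v).measurable hF (d + 1))
    fun g hg => .of_eq (hinv hg)
  have hc : ¬IsOfFinAddOrder c := by
    obtain ⟨x, hx, hxc⟩ := (hinf.and hconst).exists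
    rwa [hxc] at hx
  -- only a multiple of `v` is known to lie in `Λ`, hence to preserve `Y`
  have hpow := pow_sub_one_pow_apply Λ.index (d + 1) hfix
  rw [← hT.koopman_nsmul] at hpow
  have hfix' : koopman (T (Λ.index • v)) (((koopman (T v) - 1) ^ (d + 1)) F)
      = ((koopman (T v) - 1) ^ (d + 1)) F := by
    rw [hT.koopman_nsmul, Module.End.pow_apply, Function.iterate_fixed hfix]
  refine map_eq_volume_of_koopman_sub_one_pow_ae_eq_const
    (hY.measurePreserving_cond hT (Λ.nsmul_index_mem v)) d hF ?_
    (c := ((Λ.index ^ (d + 1) : ℕ) : ℤ) • c) (not_isOfFinAddOrder_zsmul hc ?_) ?_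
  · rw [hpow, map_nsmul, hfix']
  · exact_mod_cast pow_ne_zero _ AddSubgroup.FiniteIndex.index_ne_zero
  · rw [hpow]
    filter_upwards [hconst] with x hx
    rw [Pi.smul_apply, hx, natCast_zsmul]

theorem IsMPAction.isVirtuallyConstOrHaar_of_le_stabilizer [IsFiniteMeasure μ]
    (hT : IsMPAction μ T) {Λ : AddSubgroup G} [hΛ : Λ.FiniteIndex] (hF : Measurable F)
    (hinv : Λ ≤ hT.stabilizer F) : IsVirtuallyConstOrHaar μ T F :=
  ⟨Λ, hΛ, fun _ hle _ _ hY => .inl (hY.exists_ae_eq_const hF fun _ hg => .of_eq (hinv (hle hg)))⟩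

theorem IsErgodicAction.isVirtuallyConstOrHaar_of_koopman_sub_one_pow_eq_zero [Countable G]
    [AddGroup.FG G] [IsProbabilityMeasure μ] (hT : IsErgodicAction μ T) {H : AddSubgroup G}
    {v : G} (hHv : (H ⊔ .zmultiples v).FiniteIndex) (hF : Measurable F)
    (hH : H ≤ hT.stabilizer F) (k : ℕ) (hk : ((koopman (T v) - 1) ^ (k + 1)) F = 0) :
    IsVirtuallyConstOrHaar μ T F := by
  induction k generalizing F v with
  | zero =>
    have hv : koopman (T v) F = F := sub_eq_zero.1 (by simpa using hk)
    exact hT.isVirtuallyConstOrHaar_of_le_stabilizer hF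
      (sup_le hH (AddSubgroup.zmultiples_le_of_mem hv))
  | succ k ih =>
    set D := ((koopman (T v) - 1) ^ (k + 1)) F
    have hDmeas : Measurable D :=
      measurable_koopman_sub_one_pow (hT.measurePreserving v).measurable hF (k + 1)
    have hDv : koopman (T v) D = D := by
      rw [pow_succ', Module.End.mul_apply] at hk
      exact sub_eq_zero.1 hk
    have hDinv : H ⊔ .zmultiples v ≤ hT.stabilizer D :=
      sup_le (hH.trans (hT.stabilizer_le_stabilizer_koopman_sub_one_pow v _))
        (AddSubgroup.zmultiples_le_of_mem hDv)
    obtain ⟨n, hn, htors⟩ := hT.exists_nsmul_eq_zero_of_isOfFinAddOrder hDmeas hDinv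
    -- the part of `X` where the invariant function `D` takes torsion values
    let R : Set X := {x | n • D x = 0}
    have hRmeas : MeasurableSet R := hDmeas.const_smul n (measurableSet_singleton 0)
    have hRinv {w : G} (hw : w ∈ H ⊔ .zmultiples v) : T w ⁻¹' R = R :=
      congrArg (fun E : X → UnitAddCircle => {x | n • E x = 0}) (hDinv hw)
    have hv : v ∈ H ⊔ .zmultiples v := le_sup_right (a := H) (AddSubgroup.mem_zmultiples v)
    have hR : ((koopman (T (n • v)) - 1) ^ (k + 1)) (R.indicator F) = 0 := by
      rw [hT.koopman_nsmul]
      exact koopman_pow_sub_one_pow_indicator_eq_zero (hRinv hv) hDv fun x hx => hx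
    have hRH : H ≤ hT.stabilizer (R.indicator F) := fun h hh =>
      (koopman_indicator (hRinv (le_sup_left (a := H) hh)) F).trans (congrArg _ (hH hh))
    obtain ⟨Λ, hΛ, hIH⟩ :=
      ih (finiteIndex_sup_zmultiples_nsmul hHv hn) (hF.indicator hRmeas) hRH hR
    refine ⟨(H ⊔ .zmultiples v) ⊓ Λ, inferInstance, fun Λ' hle hΛ' Y hY => ?_⟩
    rcases hY.ae_mem_or_ae_notMem hRmeas fun w hw => .of_eq (hRinv (hle hw).1) with hmem | hnot
    · refine (hIH Λ' (hle.trans inf_le_right) hΛ' Y hY).congr ?_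
      filter_upwards [hmem] with x hx using Set.indicator_of_mem hx F
    · refine .inr (hY.map_cond_eq_volume hT.toIsMPAction v k hF hDv
        (fun g hg => hDinv (hle hg).1) ?_)
      filter_upwards [hnot, cond_absolutelyContinuous.ae_le htors] with x hx htx hfin
      exact hx (htx hfin)

end Dichotomy

section Spectral

open ProbabilityTheory

variable {X : Type*} [MeasurableSpace X] {μ : Measure X} [IsProbabilityMeasure μ]
  {T : ℤ × ℤ → X → X} {Λ : AddSubgroup (ℤ × ℤ)} {Δ : Finset (ℤ × ℤ)}
  {F : ℤ × ℤ → X → UnitAddCircle}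

theorem IsErgodicAction.isVirtuallyConstOrHaar_of_sum (hT : IsErgodicAction μ T)
    [Λ.FiniteIndex] (hΔ0 : ∀ g ∈ Δ, g ≠ 0)
    (hΔprop : ∀ g ∈ Δ, ∀ h ∈ Δ, g ≠ h → ¬Proportional g h)
    (hF : ∀ g ∈ Δ, g ∈ hT.stabilizer (F g)) (hsum : Λ ≤ hT.stabilizer (∑ g ∈ Δ, F g))
    {g : ℤ × ℤ} (hg : g ∈ Δ) (hmeas : Measurable (F g)) : IsVirtuallyConstOrHaar μ T (F g) := by
  have hcross (h : ℤ × ℤ) (hh : h ∈ Δ.erase g) : cross h g ≠ 0 :=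
    have hhΔ := Finset.mem_of_mem_erase hh
    cross_ne_zero_of_not_proportional (hΔ0 h hhΔ) (hΔ0 g hg)
      (hΔprop h hhΔ g hg (Finset.ne_of_mem_erase hh))
  obtain ⟨v, hvΛ, hvg, hv⟩ :=
    exists_mem_forall_exists_add_zsmul_eq_zsmul (Λ := Λ) (hΔ0 g hg) hcross
  choose! b k hbk using hv
  have hvbg (h : ℤ × ℤ) : koopman (T (v + b h • g)) (F g) = koopman (T v) (F g) := by
    rw [add_comm, hT.add]
    exact congrArg (· ∘ T v) (zsmul_mem (hF g hg) (b h))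
  have hvbh (h : ℤ × ℤ) (hh : h ∈ Δ.erase g) : koopman (T (v + b h • g)) (F h) = F h := by
    rw [hbk h hh]
    exact zsmul_mem (hF h (Finset.mem_of_mem_erase hh)) (k h)
  have hnil := sub_one_pow_card_add_one_apply_eq_zero (W := fun h => koopman (T (v + b h • g)))
    (fun h => hT.commute_koopman v _) (fun h h' => hT.commute_koopman _ _) (Δ.erase g) hvbh
    (fun h _ => hvbg h) (by rw [Finset.add_sum_erase _ _ hg]; exact hsum hvΛ)
  refine hT.isVirtuallyConstOrHaar_of_koopman_sub_one_pow_eq_zero (H := .zmultiples g) ?_ hmeas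
    (AddSubgroup.zmultiples_le_of_mem (hF g hg)) _ hnil
  rw [sup_comm]
  exact finiteIndex_zmultiples_sup_zmultiples hvg

theorem IsErgodicAction.isVirtuallyConstOrHaar_of_sum_ae (hT : IsErgodicAction μ T)
    [Λ.FiniteIndex] (hΔ0 : ∀ g ∈ Δ, g ≠ 0)
    (hΔprop : ∀ g ∈ Δ, ∀ h ∈ Δ, g ≠ h → ¬Proportional g h)
    (hF : ∀ g ∈ Δ, g ∈ hT.stabilizer (F g))
    (hsum : ∀ w ∈ Λ, koopman (T w) (∑ g ∈ Δ, F g) =ᵐ[μ] ∑ g ∈ Δ, F g)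
    {g : ℤ × ℤ} (hg : g ∈ Δ) (hmeas : Measurable (F g)) : IsVirtuallyConstOrHaar μ T (F g) := by
  obtain ⟨Z, hZ, hZinv, hZae, hZsum⟩ := hT.exists_invariant_measurableSet_of_ae
    (ae_all_iff.2 fun w : Λ => hsum w w.2)
  refine IsVirtuallyConstOrHaar.congr (F := Z.indicator (F g)) ?_
    (hZae.mono fun x hx => Set.indicator_of_mem hx (F g))
  refine hT.isVirtuallyConstOrHaar_of_sum (Λ := Λ) (F := fun g => Z.indicator (F g)) hΔ0 hΔprop
    (fun h hh => (koopman_indicator (hZinv h) _).trans (congrArg _ (hF h hh))) (fun w hw => ?_)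
    hg (hmeas.indicator hZ)
  change koopman (T w) (∑ g ∈ Δ, Z.indicator (F g)) = ∑ g ∈ Δ, Z.indicator (F g)
  rw [← Finset.indicator_sum, koopman_indicator (hZinv w)]
  exact Set.indicator_congr fun x hx => hZsum x hx ⟨w, hw⟩

end Spectral

section RealFunctions

open ProbabilityTheory

variable {X : Type*} [MeasurableSpace X] {μ : Measure X}

theorem exp_two_pi_I_mul_eq_toCircle (t : ℝ) :
    Complex.exp (2 * Real.pi * Complex.I * t) = AddCircle.toCircle (t : UnitAddCircle) := by
  rw [AddCircle.toCircle_apply_mk, Circle.coe_exp]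
  congr 1
  push_cast
  ring

theorem map_toCircle_volume :
    Measure.map (fun t : UnitAddCircle => (AddCircle.toCircle t : ℂ)) volume = circleHaar := by
  have h := UnitAddCircle.measurePreserving_mk 0
  rw [zero_add] at h
  rw [← h.map_eq, Measure.map_map measurable_toCircle_coe h.measurable, circleHaar]
  simp only [exp_two_pi_I_mul_eq_toCircle]
  rfl

theorem IsConstOrHaar.exp {ν : Measure X} {f : X → ℝ}
    (hf : Measurable f) (h : IsConstOrHaar ν fun x => (f x : UnitAddCircle)) :
    (∃ c, (fun x => Complex.exp (2 * Real.pi * Complex.I * f x)) =ᵐ[ν] fun _ => c) ∨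
      ν.map (fun x => Complex.exp (2 * Real.pi * Complex.I * f x)) = circleHaar := by
  simp only [exp_two_pi_I_mul_eq_toCircle]
  refine h.imp (fun ⟨c, hc⟩ => ⟨AddCircle.toCircle c, hc.mono fun x hx =>
    congrArg (fun t => (AddCircle.toCircle t : ℂ)) hx⟩) fun hmap => ?_
  rw [← map_toCircle_volume, ← hmap, Measure.map_map measurable_toCircle_coe]
  · rfl
  · exact (AddCircle.continuous_mk' 1).measurable.comp hf

theorem measurable_invProj (T : ℤ × ℤ → X → X) (f : X → ℝ) (g : ℤ × ℤ) :
    Measurable (invProj μ T f g) :=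
  (stronglyMeasurable_condExp (m := invSigma (T g))).measurable.mono (fun _ h => h.1) le_rfl

theorem invProj_comp (T : ℤ × ℤ → X → X) (f : X → ℝ) (g : ℤ × ℤ) :
    invProj μ T f g ∘ T g = invProj μ T f g := by
  have hmeas : Measurable[invSigma (T g)] (invProj μ T f g) :=
    stronglyMeasurable_condExp.measurable
  funext x
  have hlevel : T g ⁻¹' (invProj μ T f g ⁻¹' {invProj μ T f g x})
      = invProj μ T f g ⁻¹' {invProj μ T f g x} := (hmeas (measurableSet_singleton _)).2
  exact hlevel.ge (Set.mem_singleton (invProj μ T f g x))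

theorem periodicFun_iff {T : ℤ × ℤ → X → X} {f : X → ℝ} : PeriodicFun μ T f ↔
    ∃ Λ : AddSubgroup (ℤ × ℤ), Λ.FiniteIndex ∧ ∀ g ∈ Λ, f ∘ T g =ᵐ[μ] f := by
  refine exists_congr fun Λ => and_congr_right fun _ =>
    ⟨fun h g hg => ?_, fun h g hg => h (-g) (neg_mem hg)⟩
  have := h (-g) (neg_mem hg)
  rwa [neg_neg] at this

theorem isErgodicComponents_of_ergodicAtoms {T : ℤ × ℤ → X → X} {Λ : AddSubgroup (ℤ × ℤ)} {n : ℕ}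
    {Xs : Fin n → Set X} (hdisj : ∀ i j, i ≠ j → Disjoint (Xs i) (Xs j))
    (hatom : ∀ i, IsErgodicAtom μ T Λ (Xs i)) (hcov : ∀ᵐ x ∂μ, ∃ i, x ∈ Xs i) :
    IsErgodicComponents μ T Λ Xs := by
  refine ⟨fun i => (hatom i).measurableSet, fun i => (hatom i).measure_ne_zero.bot_lt,
    fun i j hij => ?_, ?_, fun i => (hatom i).invariant, fun i => (hatom i).null_or_full⟩
  · rw [(hdisj i j hij).inter_eq, measure_empty]
  · rw [measure_eq_zero_iff_ae_notMem]
    exact hcov.mono fun x hx h => h.2 (Set.mem_iUnion.2 hx)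

theorem IsErgodicAction.isVirtuallyConstOrHaar_coe_invProj [IsProbabilityMeasure μ]
    {T : ℤ × ℤ → X → X} (hT : IsErgodicAction μ T) {f : X → ℝ}
    (hint : ∀ᵐ x ∂μ, ∃ k : ℤ, f x = k) {Δ : Finset (ℤ × ℤ)} (hΔ0 : ∀ g ∈ Δ, g ≠ 0)
    (hΔprop : ∀ g ∈ Δ, ∀ h ∈ Δ, g ≠ h → ¬Proportional g h)
    (hf0 : PeriodicFun μ T (f - ∑ g ∈ Δ, invProj μ T f g)) {g : ℤ × ℤ} (hg : g ∈ Δ) :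
    IsVirtuallyConstOrHaar μ T fun x => (invProj μ T f g x : UnitAddCircle) := by
  obtain ⟨Λ, hΛ, hper⟩ := periodicFun_iff.1 hf0
  let F (g : ℤ × ℤ) (x : X) : UnitAddCircle := invProj μ T f g x
  have hFinv (g : ℤ × ℤ) : g ∈ hT.stabilizer (F g) :=
    congrArg (fun (φ : X → ℝ) x => (φ x : UnitAddCircle)) (invProj_comp T f g)
  have hFsum : ∀ᵐ x ∂μ, (∑ g ∈ Δ, F g) x = -((f - ∑ g ∈ Δ, invProj μ T f g) x : ℝ) := by
    filter_upwards [hint] with x ⟨k, hk⟩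
    have hk0 : ((k : ℝ) : UnitAddCircle) = 0 := (AddCircle.coe_eq_zero_iff 1).2 ⟨k, by simp⟩
    rw [Pi.sub_apply, hk, AddCircle.coe_sub, hk0, zero_sub, neg_neg, Finset.sum_apply,
      Finset.sum_apply]
    exact (map_sum (QuotientAddGroup.mk' (AddSubgroup.zmultiples (1 : ℝ))) _ Δ).symm
  refine hT.isVirtuallyConstOrHaar_of_sum_ae (Λ := Λ) (F := F) hΔ0 hΔprop (fun h _ => hFinv h)
    (fun w hw => ?_) hg ((AddCircle.continuous_mk' 1).measurable.comp (measurable_invProj T f g))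
  filter_upwards [hFsum, (hT.measurePreserving w).quasiMeasurePreserving.ae hFsum, hper w hw]
    with x hx hTx hf₀
  rw [koopman_apply, Function.comp_apply, hTx, hx, ← hf₀, Function.comp_apply]

end RealFunctions

theorem constants_or_haar_on_ergodic_components_general
    {X : Type*} [MeasurableSpace X] (μ : Measure X) [IsProbabilityMeasure μ]
    (T : ℤ × ℤ → X → X) (hT : IsErgodicAction μ T)
    (f : X → ℝ) (hf : Integrable f μ) (hint : ∀ᵐ x ∂μ, ∃ k : ℤ, f x = k)
    (Δ : Finset (ℤ × ℤ)) (hΔ0 : ∀ g ∈ Δ, g ≠ 0)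
    (hΔprop : ∀ g ∈ Δ, ∀ h ∈ Δ, g ≠ h → ¬Proportional g h)
    (hf0 : PeriodicFun μ T (f - ∑ g ∈ Δ, invProj μ T f g)) :
    ∃ Λ : AddSubgroup (ℤ × ℤ), Λ.FiniteIndex ∧
      ∃ (n : ℕ) (Xs : Fin n → Set X),
        IsErgodicComponents μ T Λ Xs ∧
        ∀ i,
          (∃ c : ℝ, f - ∑ g ∈ Δ, invProj μ T f g =ᵐ[μ.restrict (Xs i)] fun _ => c) ∧
          ∀ g ∈ Δ,
            (∃ c : ℂ, (fun x => Complex.exp (2 * Real.pi * Complex.I * invProj μ T f g x))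
              =ᵐ[μ.restrict (Xs i)] fun _ => c) ∨
            Measure.map (fun x => Complex.exp (2 * Real.pi * Complex.I * invProj μ T f g x))
              ((μ (Xs i))⁻¹ • μ.restrict (Xs i)) = circleHaar := by
  obtain ⟨Λ₀, hΛ₀, hper⟩ := periodicFun_iff.1 hf0
  obtain ⟨Λ, hle, hΛ, hΛF⟩ := IsVirtuallyConstOrHaar.exists_common
    (fun g hg => hT.isVirtuallyConstOrHaar_coe_invProj hint hΔ0 hΔprop hf0 hg) Λ₀
  obtain ⟨n, Xs, hdisj, hatom, hcov⟩ := hT.exists_ergodicAtoms Λ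
  refine ⟨Λ, hΛ, n, Xs, isErgodicComponents_of_ergodicAtoms hdisj hatom hcov, fun i => ?_⟩
  have hf₀ : AEMeasurable (f - ∑ g ∈ Δ, invProj μ T f g) μ := hf.aemeasurable.sub
    (Finset.aemeasurable_sum Δ fun g _ => (measurable_invProj T f g).aemeasurable)
  rw [← ae_cond_eq_ae_restrict]
  exact ⟨(hatom i).exists_ae_eq_const_of_aemeasurable hT.toIsMPAction hf₀ fun w hw =>
    hper w (hle hw), fun g hg => (hΛF g hg _ (hatom i)).exp (measurable_invProj T f g)⟩

/-- **Lemma 4.3.** Let `(X, μ)` be ergodic, `A ⊆ X` measurable with `Ann(1_A) ≠ {0}`,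
and let `Δ` be as in the spectral decomposition of `1_A`. Then there is a finite index
subgroup `Λ ⊆ ℤ²` such that on each `Λ`-ergodic component `μ_s` : the function `f₀` is
`μ_s`-a.e. constant, and for each `g ∈ Δ`, either `exp(2πi·(1_A)^g)` is `μ_s`-a.e.
constant, or its pushforward under `μ_s` is the normalized Haar measure on `𝕋 ⊆ ℂ`. -/
theorem constants_or_haar_on_ergodic_components
    {X : Type*} [MeasurableSpace X] (μ : Measure X) [IsProbabilityMeasure μ]
    (T : ℤ × ℤ → X → X)
    (hmp : ∀ g, MeasurePreserving (T g) μ μ)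
    (hT0 : T 0 = id)
    (hTadd : ∀ g h : ℤ × ℤ, T (g + h) = T g ∘ T h)
    (herg : ∀ S : Set X, MeasurableSet S → (∀ g : ℤ × ℤ, T g ⁻¹' S =ᵐ[μ] S) →
      μ S = 0 ∨ μ S = 1)
    (A : Set X) (hA : MeasurableSet A)
    (hann : ∃ p : AddMonoidAlgebra ℤ (ℤ × ℤ), p ≠ 0 ∧
      polyAct T p (A.indicator 1) =ᵐ[μ] (fun _ => (0 : ℝ)))
    (Δ : Finset (ℤ × ℤ))
    (hΔ0 : ∀ g ∈ Δ, g ≠ (0 : ℤ × ℤ))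
    (hΔprop : ∀ g ∈ Δ, ∀ h ∈ Δ, g ≠ h → ¬ Proportional g h)
    (hf0 : PeriodicFun μ T (A.indicator 1 - ∑ g ∈ Δ, invProj μ T (A.indicator 1) g))
    (hlg : ∀ l : ℕ, 1 ≤ l → ∀ g ∈ Δ,
      PeriodicFun μ T
        (invProj μ T (A.indicator 1) (l • g) - invProj μ T (A.indicator 1) g)) :
    ∃ Λ : AddSubgroup (ℤ × ℤ), Λ.FiniteIndex ∧
      ∃ (n : ℕ) (Xs : Fin n → Set X),
        IsErgodicComponents μ T Λ Xs ∧
        ∀ i,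
          (∃ c : ℝ,
            (A.indicator 1 - ∑ g ∈ Δ, invProj μ T (A.indicator 1) g)
              =ᵐ[μ.restrict (Xs i)] fun _ => c) ∧
          ∀ g ∈ Δ,
            (∃ c : ℂ,
              (fun x => Complex.exp (2 * Real.pi * Complex.I *
                  (invProj μ T (A.indicator 1) g x : ℂ)))
                =ᵐ[μ.restrict (Xs i)] fun _ => c) ∨
            Measure.map
                (fun x => Complex.exp (2 * Real.pi * Complex.I *
                  (invProj μ T (A.indicator 1) g x : ℂ)))
                ((μ (Xs i))⁻¹ • μ.restrict (Xs i))
              = circleHaar :=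
  constants_or_haar_on_ergodic_components_general μ T ⟨⟨hT0, hTadd, hmp⟩, herg⟩
    (A.indicator 1) ((integrable_const 1).indicator hA)
    (.of_forall fun x => ⟨A.indicator 1 x, by simp [Set.indicator]⟩) Δ hΔ0 hΔprop hf0
end
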